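/- arXiv:2507.01529 — 4 statements merged into one kernel-verified Lean document; each statement's English description precedes it below -/
import Mathlib

section
/- Let k ≥ 0 and n ≥ 0 be integers, and let p₁, p₂, …, p_{k+1} be primes such that pᵢ ≥ 5 and pᵢ ≢ 1 (mod 6) for each 1 ≤ i ≤ k+1. Then for every positive integer j with j ≢ 0 (mod p_{k+1}), we have B̄_{2,9}( 18·p₁²p₂²⋯p_{k+1}²·n + (6j + p_{k+1})·3·p₁²p₂²⋯p_k²·p_{k+1} ) ≡ 0 (mod 3). -/
/-- `biregOverpartitions l1 l2 n` is the number of `(l1, l2)`-biregular overpartitions of `n`: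
overpartitions of `n` (partitions in which the first occurrence of each part size may be
overlined) none of whose parts is divisible by `l1` or by `l2`.  Each partition of `n` with
admissible parts contributes `2 ^ (number of distinct part sizes)` overpartitions,
corresponding to the choice of which part sizes have their first occurrence overlined. -/
def biregOverpartitions (l1 l2 n : ℕ) : ℕ :=
  ∑ p : Nat.Partition n,
    if ∀ x ∈ p.parts, ¬ l1 ∣ x ∧ ¬ l2 ∣ x then 2 ^ p.parts.toFinset.card else 0

open PowerSeries Finset

/-- Gaussian binomial coefficients. -/
def qBinom {R : Type*} [CommRing R] (Q : R) : ℕ → ℕ → R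
  | _, 0 => 1
  | 0, _ + 1 => 0
  | m + 1, k + 1 => qBinom Q m k + Q ^ (k + 1) * qBinom Q m (k + 1)

/-- The finite product `(1 - Q) (1 - Q ^ 2) ⋯ (1 - Q ^ m)`. -/
def qPoch {R : Type*} [CommRing R] (Q : R) (m : ℕ) : R := ∏ i ∈ range m, (1 - Q ^ (i + 1))

section qBinom

variable {R : Type*} [CommRing R]

@[simp]
lemma qBinom_zero_right (Q : R) (m : ℕ) : qBinom Q m 0 = 1 := by cases m <;> rfl

lemma qBinom_succ_succ (Q : R) (m k : ℕ) :
    qBinom Q (m + 1) (k + 1) = qBinom Q m k + Q ^ (k + 1) * qBinom Q m (k + 1) := rfl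

lemma qBinom_eq_zero_of_lt (Q : R) {m k : ℕ} (h : m < k) : qBinom Q m k = 0 := by
  induction m generalizing k with
  | zero => obtain ⟨k, rfl⟩ := Nat.exists_eq_succ_of_ne_zero h.ne'; rfl
  | succ m ih =>
    obtain ⟨k, rfl⟩ := Nat.exists_eq_succ_of_ne_zero (Nat.ne_zero_of_lt h)
    rw [Nat.succ_eq_add_one, qBinom_succ_succ, ih (by omega), ih (by omega)]
    ring

@[simp]
lemma qBinom_self (Q : R) (m : ℕ) : qBinom Q m m = 1 := by
  induction m with
  | zero => rfl
  | succ m ih => rw [qBinom_succ_succ, ih, qBinom_eq_zero_of_lt Q m.lt_succ_self]; ring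

lemma qPoch_succ (Q : R) (m : ℕ) : qPoch Q (m + 1) = qPoch Q m * (1 - Q ^ (m + 1)) :=
  prod_range_succ _ _

lemma qBinom_mul_qPoch (Q : R) (j k : ℕ) :
    qBinom Q (j + k) k * qPoch Q k * qPoch Q j = qPoch Q (j + k) := by
  induction k generalizing j with
  | zero => simp [qPoch]
  | succ k ihk =>
    induction j with
    | zero => simp [qPoch]
    | succ j ihj =>
      have h1 := ihk (j + 1)
      rw [show j + 1 + (k + 1) = (j + 1 + k) + 1 by ring, qBinom_succ_succ, qPoch_succ _ (j + 1 + k),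
        ← h1]
      rw [show j + (k + 1) = j + 1 + k by ring, ← h1] at ihj
      rw [qPoch_succ _ j] at h1 ihj ⊢
      rw [qPoch_succ _ k] at ihj ⊢
      linear_combination Q ^ (k + 1) * (1 - Q ^ (j + 1)) * ihj

lemma prod_add_mul_pow_eq_sum_qBinom (Q u v : R) (m : ℕ) :
    ∏ i ∈ range m, (u + v * Q ^ i) =
      ∑ k ∈ range (m + 1), qBinom Q m k * Q ^ (k.choose 2) * u ^ (m - k) * v ^ k := by
  induction m generalizing v with
  | zero => simp
  | succ m ih =>
    have h : ∀ i, u + v * Q ^ (i + 1) = u + v * Q * Q ^ i := fun i ↦ by ring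
    rw [prod_range_succ', pow_zero, mul_one]
    simp_rw [h]
    rw [ih, mul_add]
    have hA : (∑ k ∈ range (m + 1), qBinom Q m k * Q ^ (k.choose 2) * u ^ (m - k) * (v * Q) ^ k) * u =
        u ^ (m + 1) + ∑ k ∈ range (m + 1), Q ^ (k + 1) * qBinom Q m (k + 1) *
          Q ^ ((k + 1).choose 2) * u ^ (m - k) * v ^ (k + 1) := by
      rw [sum_range_succ' , sum_range_succ (n := m), qBinom_eq_zero_of_lt Q m.lt_succ_self, add_mul,
        sum_mul]
      simp only [qBinom_zero_right, Nat.choose_zero_succ, pow_zero, Nat.sub_zero, mul_zero, zero_mul,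
        add_zero, mul_one, one_mul]
      rw [add_comm (u ^ (m + 1)), ← pow_succ]
      congr 1
      refine sum_congr rfl fun k hk ↦ ?_
      rw [show m - k = m - (k + 1) + 1 by have := mem_range.1 hk; omega]
      ring
    rw [hA, sum_range_succ' (n := m + 1), sum_mul]
    simp only [qBinom_zero_right, Nat.choose_zero_succ, pow_zero, Nat.sub_zero, mul_one, one_mul]
    rw [add_assoc, add_comm (u ^ (m + 1)), ← sum_add_distrib]
    congr 1
    refine sum_congr rfl fun k _ ↦ ?_
    rw [qBinom_succ_succ, Nat.add_sub_add_right, Nat.choose_succ_succ' k 1, Nat.choose_one_right]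
    ring

end qBinom

/-- Reduction of power series modulo `X ^ n`. -/
noncomputable abbrev modX (R : Type*) [CommRing R] (n : ℕ) :
    R⟦X⟧ →+* R⟦X⟧ ⧸ Ideal.span {(X : R⟦X⟧) ^ n} :=
  Ideal.Quotient.mk _

section modX

variable {R : Type*} [CommRing R]

lemma modX_eq_iff_dvd {n : ℕ} {f g : R⟦X⟧} : modX R n f = modX R n g ↔ X ^ n ∣ f - g := by
  rw [Ideal.Quotient.mk_eq_mk_iff_sub_mem, Ideal.mem_span_singleton]

lemma modX_eq_iff {n : ℕ} {f g : R⟦X⟧} :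
    modX R n f = modX R n g ↔ ∀ m < n, coeff m f = coeff m g := by
  simp [modX_eq_iff_dvd, X_pow_dvd_iff, sub_eq_zero]

lemma eq_of_forall_modX_eq {f g : R⟦X⟧} (h : ∀ n, modX R n f = modX R n g) : f = g := by
  ext m
  exact modX_eq_iff.1 (h (m + 1)) m m.lt_succ_self

lemma modX_X_pow {n m : ℕ} (h : n ≤ m) : modX R n (X ^ m) = 0 := by
  rw [Ideal.Quotient.eq_zero_iff_mem, Ideal.mem_span_singleton]
  exact pow_dvd_pow _ h

lemma isUnit_qPoch_X_sq (m : ℕ) : IsUnit (qPoch (X ^ 2 : R⟦X⟧) m) := by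
  rw [PowerSeries.isUnit_iff_constantCoeff]
  simp [qPoch, map_prod]

lemma modX_qPoch_X_sq {n m : ℕ} (h : n ≤ m) :
    modX R (2 * (n + 1)) (qPoch (X ^ 2) m) = modX R (2 * (n + 1)) (qPoch (X ^ 2) n) := by
  induction m, h using Nat.le_induction with
  | base => rfl
  | succ m hm ih =>
    rw [qPoch_succ, map_mul, ih, map_sub, ← pow_mul, modX_X_pow (by omega)]
    simp

lemma X_pow_dvd_qBinom_mul_qPoch_sub_one (j k m : ℕ) (hj : m ≤ j) (hk : m ≤ k) :
    (X : R⟦X⟧) ^ (2 * (m + 1)) ∣ qBinom (X ^ 2) (j + k) k * qPoch (X ^ 2) (j + k) - 1 := by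
  rw [← modX_eq_iff_dvd]
  have h := congrArg (modX R (2 * (m + 1))) (qBinom_mul_qPoch (X ^ 2 : R⟦X⟧) j k)
  have hu := (isUnit_qPoch_X_sq (R := R) m).map (modX R (2 * (m + 1)))
  simp only [map_mul, modX_qPoch_X_sq hj, modX_qPoch_X_sq hk,
    modX_qPoch_X_sq (show m ≤ j + k by omega), map_one] at h ⊢
  exact hu.mul_right_cancel (by rw [h, one_mul])

end modX

section theta

variable (R : Type*) [CommRing R]

/-- Ramanujan's theta function `φ(q) = ∑ q ^ (k ^ 2)`, summed over all integers `k`. -/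
noncomputable def theta : R⟦X⟧ :=
  PowerSeries.mk fun n ↦ ∑ k ∈ Icc (-n : ℤ) n, if k.natAbs ^ 2 = n then 1 else 0

/-- The partial sum of `theta` over the integers of absolute value at most `N`. -/
noncomputable def thetaSum (N : ℕ) : R⟦X⟧ := ∑ k ∈ Icc (-N : ℤ) N, X ^ (k.natAbs ^ 2)

lemma modX_theta {n N : ℕ} (h : n ≤ N + 1) : modX R n (theta R) = modX R n (thetaSum R N) := by
  rw [modX_eq_iff]
  intro m hm
  simp only [theta, thetaSum, coeff_mk, map_sum, coeff_X_pow]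
  simp_rw [eq_comm (a := m)]
  refine sum_subset (Icc_subset_Icc (by omega) (by omega)) fun k _ hk ↦ if_neg ?_
  rintro rfl
  have := Nat.le_self_pow two_ne_zero k.natAbs
  simp only [mem_Icc] at hk
  omega

lemma prod_one_add_X_pow_odd_sq (n : ℕ) :
    (∏ i ∈ range n, (1 + X ^ (2 * i + 1) : R⟦X⟧)) ^ 2 =
      ∑ k ∈ Icc (-n : ℤ) n, qBinom (X ^ 2) (2 * n) (k + n).toNat * X ^ (k.natAbs ^ 2) := by
  have hX : Function.Injective fun f : R⟦X⟧ ↦ X ^ (3 * n ^ 2) * f := by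
    intro f g h
    ext m
    have h := congrArg (coeff (m + 3 * n ^ 2)) h
    rwa [coeff_X_pow_mul, coeff_X_pow_mul] at h
  apply hX
  beta_reduce
  have h := prod_add_mul_pow_eq_sum_qBinom (X ^ 2 : R⟦X⟧) (X ^ (2 * n)) X (2 * n)
  have h1 : ∏ i ∈ range (2 * n), ((X : R⟦X⟧) ^ (2 * n) + X * (X ^ 2) ^ i) =
      X ^ (3 * n ^ 2) * (∏ i ∈ range n, (1 + X ^ (2 * i + 1) : R⟦X⟧)) ^ 2 := by
    have hodd : ∏ i ∈ range n, (X : R⟦X⟧) ^ (2 * i + 1) = X ^ (n ^ 2) := by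
      rw [prod_pow_eq_pow_sum]
      congr 1
      clear h hX
      induction n with
      | zero => simp
      | succ n ih => rw [sum_range_succ, ih]; ring
    rw [two_mul, prod_range_add]
    have e1 : ∏ i ∈ range n, ((X : R⟦X⟧) ^ (n + n) + X * (X ^ 2) ^ i) =
        X ^ (n ^ 2) * ∏ i ∈ range n, (1 + X ^ (2 * i + 1) : R⟦X⟧) := by
      rw [← prod_range_reflect (fun i ↦ (1 + X ^ (2 * i + 1) : R⟦X⟧)), ← hodd, ← prod_mul_distrib]
      refine prod_congr rfl fun i hi ↦ ?_
      have hi := mem_range.1 hi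
      rw [mul_add, ← pow_add, show 2 * i + 1 + (2 * (n - 1 - i) + 1) = n + n by omega]
      ring
    have e2 : ∏ i ∈ range n, ((X : R⟦X⟧) ^ (n + n) + X * (X ^ 2) ^ (n + i)) =
        X ^ (2 * n ^ 2) * ∏ i ∈ range n, (1 + X ^ (2 * i + 1) : R⟦X⟧) := by
      rw [show 2 * n ^ 2 = (n + n) * n by ring, pow_mul]
      conv_rhs => rw [show n = #(range n) by simp, ← prod_const]
      simp only [card_range]
      rw [← prod_mul_distrib]
      exact prod_congr rfl fun i _ ↦ by ring
    rw [e1, e2]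
    ring
  rw [← h1, h, mul_sum]
  refine sum_nbij' (fun k ↦ (k : ℤ) - n) (fun k ↦ (k + n).toNat) ?_ ?_ ?_ ?_ ?_
  · intro k hk; simp only [mem_range, mem_Icc] at *; omega
  · intro k hk; simp only [mem_range, mem_Icc] at *; omega
  · intro k hk; simp
  · intro k hk; simp only [mem_Icc] at *; omega
  · intro k hk
    have hk := mem_range.1 hk
    simp only [sub_add_cancel, Int.toNat_natCast]
    have : (2 : ℕ) * k.choose 2 + k = k ^ 2 := by
      rw [Nat.choose_two_right, Nat.mul_div_cancel' (Nat.even_mul_pred_self k).two_dvd]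
      cases k <;> simp; ring
    have key : 2 * k.choose 2 + (2 * n) * (2 * n - k) + k = 3 * n ^ 2 + ((k : ℤ) - n).natAbs ^ 2 := by
      zify [show k ≤ 2 * n by omega] at this ⊢
      rw [sq_abs]
      linear_combination this
    rw [mul_left_comm, ← pow_add, ← key]
    ring

/-- Gauss' product for `theta`, modulo `X ^ n`. -/
lemma modX_theta_eq_prod (n : ℕ) :
    modX R n (theta R) = modX R n ((∏ i ∈ range n, (1 + X ^ (2 * i + 1))) ^ 2 *
      qPoch (X ^ 2) (2 * n)) := by
  rw [modX_theta R n.le_succ, prod_one_add_X_pow_odd_sq, thetaSum, sum_mul, map_sum, map_sum]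
  refine sum_congr rfl fun k hk ↦ Eq.symm ?_
  rw [modX_eq_iff_dvd]
  have hk := mem_Icc.1 hk
  have h := X_pow_dvd_qBinom_mul_qPoch_sub_one (R := R) (n - k).toNat (k + n).toNat (n - k.natAbs)
    (by omega) (by omega)
  rw [show (n - k).toNat + (k + n).toNat = 2 * n by omega] at h
  rw [show qBinom (X ^ 2) (2 * n) (k + n).toNat * (X : R⟦X⟧) ^ (k.natAbs ^ 2) * qPoch (X ^ 2) (2 * n)
    - X ^ (k.natAbs ^ 2) = X ^ (k.natAbs ^ 2) *
      (qBinom (X ^ 2) (2 * n) (k + n).toNat * qPoch (X ^ 2) (2 * n) - 1) by ring]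
  refine (pow_dvd_pow X ?_).trans ((pow_add X (k.natAbs ^ 2) _).dvd.trans (mul_dvd_mul_left _ h))
  have := Nat.le_self_pow two_ne_zero k.natAbs
  omega

/-- The theta function `φ(-q)`. -/
noncomputable def thetaNeg : R⟦X⟧ := rescale (-1) (theta R)

lemma modX_thetaNeg_eq_prod (n : ℕ) :
    modX R n (thetaNeg R) = modX R n ((∏ i ∈ range n, (1 - X ^ (2 * i + 1))) ^ 2 *
      qPoch (X ^ 2) (2 * n)) := by
  have h := modX_theta_eq_prod R n
  have h2 : (∏ i ∈ range n, (1 - X ^ (2 * i + 1))) ^ 2 * qPoch (X ^ 2) (2 * n) =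
      rescale (-1) ((∏ i ∈ range n, (1 + X ^ (2 * i + 1))) ^ 2 * qPoch (X ^ 2 : R⟦X⟧) (2 * n)) := by
    simp [qPoch, map_prod, pow_succ, pow_mul, sub_eq_add_neg]
  rw [h2, thetaNeg, modX_eq_iff]
  intro m hm
  rw [coeff_rescale, coeff_rescale, modX_eq_iff.1 h m hm]

/-- `φ(q) (q; q²)² = φ(-q) (-q; q²)²`, modulo `X ^ n`. -/
lemma modX_theta_mul_prod (n : ℕ) :
    modX R n (theta R * (∏ i ∈ range n, (1 - X ^ (2 * i + 1))) ^ 2) =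
      modX R n (thetaNeg R * (∏ i ∈ range n, (1 + X ^ (2 * i + 1))) ^ 2) := by
  rw [map_mul, map_mul, modX_theta_eq_prod, modX_thetaNeg_eq_prod, ← map_mul, ← map_mul]
  congr 1
  ring

end theta

section genFun

open scoped PowerSeries.WithPiTopology

variable {R : Type*} [CommRing R] [TopologicalSpace R] [T2Space R]

lemma modX_of_hasProd {f : ℕ → R⟦X⟧} {g : R⟦X⟧} (h : HasProd f g)
    (hf : ∀ n i, n ≤ i → modX R n (f i) = 1) {n N : ℕ} (hN : n ≤ N) :
    modX R n g = modX R n (∏ i ∈ range N, f i) := by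
  rw [modX_eq_iff]
  intro m hm
  have ht := ((PowerSeries.WithPiTopology.continuous_coeff R m).tendsto g).comp h.tendsto_prod_nat
  refine tendsto_nhds_unique ht (tendsto_atTop_of_eventually_const (i₀ := N) fun M hM ↦ ?_)
  suffices modX R n (∏ i ∈ range M, f i) = modX R n (∏ i ∈ range N, f i) from
    modX_eq_iff.1 this m hm
  induction M, hM using Nat.le_induction with
  | base => rfl
  | succ M hM ih => rw [prod_range_succ, map_mul, ih, hf n M (by omega), mul_one]

lemma genFun_factor_mul_one_sub [IsTopologicalRing R] (s : ℕ) :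
    (1 + ∑' j, (2 : R) • (X : R⟦X⟧) ^ ((s + 1) * (j + 1))) * (1 - X ^ (s + 1)) =
      1 + X ^ (s + 1) := by
  have h0 : constantCoeff ((X : R⟦X⟧) ^ (s + 1)) = 0 := by simp
  have hs := PowerSeries.WithPiTopology.summable_pow_of_constantCoeff_eq_zero h0
  have h1 : ∑' j, (2 : R) • (X : R⟦X⟧) ^ ((s + 1) * (j + 1)) =
      2 * X ^ (s + 1) * ∑' j, ((X : R⟦X⟧) ^ (s + 1)) ^ j := by
    rw [← hs.tsum_mul_left]
    refine tsum_congr fun j ↦ ?_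
    rw [two_smul]
    ring
  have h2 := PowerSeries.WithPiTopology.tsum_pow_mul_one_sub_of_constantCoeff_eq_zero h0
  rw [h1]
  linear_combination 2 * X ^ (s + 1) * h2

end genFun

instance : CharP (ZMod 3)⟦X⟧ 3 := charP_of_injective_algebraMap (C_injective (R := ZMod 3)) 3

lemma modX_prod_pow_nine (c : (ZMod 3)⟦X⟧) (hc : c ^ 9 = c) (n : ℕ) :
    modX (ZMod 3) n (∏ i ∈ range n, (1 + c * X ^ (2 * i + 1))) ^ 9 =
      modX (ZMod 3) n (∏ i ∈ range n, if 9 ∣ 2 * i + 1 then 1 + c * X ^ (2 * i + 1) else 1) := by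
  have h9 : ∀ i, (1 + c * X ^ (2 * i + 1)) ^ 9 = 1 + c * X ^ (2 * (9 * i + 4) + 1) := by
    intro i
    have := add_pow_char_pow (p := 3) (n := 2) (1 : (ZMod 3)⟦X⟧) (c * X ^ (2 * i + 1))
    norm_num [mul_pow, hc] at this
    rw [this]
    ring
  rw [← map_pow, ← prod_pow, map_prod, map_prod]
  trans ∏ i ∈ range (9 * n), modX (ZMod 3) n
    (if 9 ∣ 2 * i + 1 then 1 + c * X ^ (2 * i + 1) else 1)
  · refine prod_of_injOn (fun i ↦ 9 * i + 4) (fun i _ j _ h ↦ by simpa using h) ?_ ?_ ?_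
    · intro i hi
      simp only [coe_range, Set.mem_Iio] at *
      omega
    · intro i hi hi'
      rw [if_neg, map_one]
      intro h
      refine hi' ⟨i / 9, ?_, ?_⟩
      · simp only [coe_range, Set.mem_Iio, mem_range] at *
        omega
      · dsimp only
        omega
    · intro i _
      rw [h9, if_pos (by omega)]
  · refine (prod_subset (range_subset_range.2 (by omega)) fun i _ hi ↦ ?_).symm
    rw [mem_range] at hi
    split_ifs
    · rw [map_add, map_mul, modX_X_pow (by omega)]
      simp
    · simp

/-- The generating function of `(2, 9)`-biregular overpartitions modulo `3`. -/
noncomputable def biregSeries : (ZMod 3)⟦X⟧ :=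
  PowerSeries.mk fun n ↦ (biregOverpartitions 2 9 n : ZMod 3)

lemma biregSeries_eq_genFun : biregSeries =
    Nat.Partition.genFun fun i _ ↦ if ¬ 2 ∣ i ∧ ¬ 9 ∣ i then (2 : ZMod 3) else 0 := by
  ext n
  rw [biregSeries, coeff_mk, Nat.Partition.coeff_genFun, biregOverpartitions, Nat.cast_sum]
  refine sum_congr rfl fun p _ ↦ ?_
  rw [Finsupp.prod, Multiset.toFinsupp_support]
  split_ifs with h
  · rw [prod_congr rfl fun i hi ↦ if_pos (h i (Multiset.mem_toFinset.1 hi))]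
    simp
  · push Not at h
    obtain ⟨i, hi, h⟩ := h
    rw [Nat.cast_zero, prod_eq_zero (Multiset.mem_toFinset.2 hi) (if_neg fun h' ↦ h'.2 (h h'.1))]

open scoped PowerSeries.WithPiTopology in
lemma modX_biregSeries_mul_prod (n : ℕ) :
    modX (ZMod 3) n (biregSeries *
        ∏ i ∈ range n, if 9 ∣ 2 * i + 1 then 1 else 1 + -1 * X ^ (2 * i + 1)) =
      modX (ZMod 3) n (∏ i ∈ range n, if 9 ∣ 2 * i + 1 then 1 else 1 + 1 * X ^ (2 * i + 1)) := by
  let _ : TopologicalSpace (ZMod 3) := ⊥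
  have : DiscreteTopology (ZMod 3) := ⟨rfl⟩
  have h := Nat.Partition.hasProd_genFun
    fun i _ ↦ if ¬ 2 ∣ i ∧ ¬ 9 ∣ i then (2 : ZMod 3) else 0
  rw [← biregSeries_eq_genFun] at h
  set F : ℕ → (ZMod 3)⟦X⟧ := fun i ↦
    1 + ∑' j, (if ¬ 2 ∣ i + 1 ∧ ¬ 9 ∣ i + 1 then (2 : ZMod 3) else 0) • X ^ ((i + 1) * (j + 1))
    with hF
  have hF1 : ∀ i, ¬ (¬ 2 ∣ i + 1 ∧ ¬ 9 ∣ i + 1) → F i = 1 := fun i hi ↦ by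
    simp only [hF, if_neg hi, zero_smul, tsum_zero, add_zero]
  have hF2 : ∀ i, (¬ 2 ∣ i + 1 ∧ ¬ 9 ∣ i + 1) → F i * (1 - X ^ (i + 1)) = 1 + X ^ (i + 1) :=
    fun i hi ↦ by
      simp only [hF, if_pos hi]
      exact genFun_factor_mul_one_sub i
  clear_value F
  have hF3 : ∀ n i, n ≤ i → modX (ZMod 3) n (F i) = 1 := by
    intro n i hni
    by_cases hi : ¬ 2 ∣ i + 1 ∧ ¬ 9 ∣ i + 1
    · have := congrArg (modX (ZMod 3) n) (hF2 i hi)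
      rwa [map_mul, map_sub, map_add, modX_X_pow (by omega), map_one, sub_zero, mul_one,
        add_zero] at this
    · rw [hF1 i hi, map_one]
  have hprod : ∀ n, ∏ i ∈ range (2 * n), F i = ∏ i ∈ range n, F (2 * i) := by
    intro n
    induction n with
    | zero => simp
    | succ n ih =>
      rw [mul_add, mul_one, prod_range_succ, prod_range_succ, ih, prod_range_succ,
        hF1 (2 * n + 1) (by omega), mul_one]
  rw [map_mul, modX_of_hasProd h hF3 (show n ≤ 2 * n by omega), hprod, ← map_mul,
    ← prod_mul_distrib]
  congr 1
  refine prod_congr rfl fun i _ ↦ ?_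
  split_ifs with h9
  · rw [hF1 _ (by omega), mul_one]
  · rw [neg_one_mul, ← sub_eq_add_neg, hF2 _ (by omega), one_mul]

/-- Modulo `3` the generating function is `φ(-q)⁴ / φ(q)⁴`. -/
lemma biregSeries_mul_theta_pow_four :
    biregSeries * theta (ZMod 3) ^ 4 = thetaNeg (ZMod 3) ^ 4 := by
  refine eq_of_forall_modX_eq fun n ↦ ?_
  have hG := modX_biregSeries_mul_prod n
  have hsplit : ∀ c : (ZMod 3)⟦X⟧, ∏ i ∈ range n, (1 + c * X ^ (2 * i + 1)) =
      (∏ i ∈ range n, if 9 ∣ 2 * i + 1 then 1 else 1 + c * X ^ (2 * i + 1)) *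
      ∏ i ∈ range n, if 9 ∣ 2 * i + 1 then 1 + c * X ^ (2 * i + 1) else 1 := by
    intro c
    rw [← prod_mul_distrib]
    refine prod_congr rfl fun i _ ↦ ?_
    split_ifs <;> simp
  have hunit : ∀ c : (ZMod 3)⟦X⟧, IsUnit (∏ i ∈ range n, (1 + c * X ^ (2 * i + 1))) := by
    intro c
    rw [PowerSeries.isUnit_iff_constantCoeff]
    simp [map_prod]
  have hp := modX_prod_pow_nine 1 (by simp) n
  have hm := modX_prod_pow_nine (-1) (by norm_num) n
  have ep := congrArg (modX (ZMod 3) n) (hsplit 1)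
  have em := congrArg (modX (ZMod 3) n) (hsplit (-1))
  have up := (hunit 1).map (modX (ZMod 3) n)
  have um := (hunit (-1)).map (modX (ZMod 3) n)
  have hth := modX_theta_mul_prod (ZMod 3) n
  have e1 : ∀ i : ℕ, (1 + X ^ (2 * i + 1) : (ZMod 3)⟦X⟧) = 1 + 1 * X ^ (2 * i + 1) :=
    fun i ↦ by rw [one_mul]
  have e2 : ∀ i : ℕ, (1 - X ^ (2 * i + 1) : (ZMod 3)⟦X⟧) = 1 + -1 * X ^ (2 * i + 1) :=
    fun i ↦ by ring
  simp_rw [e1, e2] at hth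
  simp only [map_mul, map_pow] at hth hG ep em ⊢
  generalize modX (ZMod 3) n (∏ i ∈ range n, (1 + 1 * X ^ (2 * i + 1))) = Dp at *
  generalize modX (ZMod 3) n (∏ i ∈ range n, (1 + -1 * X ^ (2 * i + 1))) = Dm at *
  rw [← hp] at ep
  rw [← hm] at em
  generalize modX (ZMod 3) n
    (∏ i ∈ range n, if 9 ∣ 2 * i + 1 then 1 else 1 + 1 * X ^ (2 * i + 1)) = Ep at *
  generalize modX (ZMod 3) n
    (∏ i ∈ range n, if 9 ∣ 2 * i + 1 then 1 else 1 + -1 * X ^ (2 * i + 1)) = Em at *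
  generalize modX (ZMod 3) n biregSeries = G at *
  generalize modX (ZMod 3) n (theta (ZMod 3)) = t at *
  generalize modX (ZMod 3) n (thetaNeg (ZMod 3)) = s at *
  have h8 : G * Dp ^ 8 = Dm ^ 8 := by
    refine (um.mul up).mul_right_cancel ?_
    linear_combination G * Dp ^ 9 * em + Dm ^ 9 * Dp ^ 9 * hG - Dm ^ 9 * ep
  refine (um.pow 8).mul_right_cancel ?_
  have h4 : (t * Dm ^ 2) ^ 4 = (s * Dp ^ 2) ^ 4 := by rw [hth]
  linear_combination G * h4 + s ^ 4 * h8

lemma pow_three_eq_expand (f : (ZMod 3)⟦X⟧) : f ^ 3 = expand 3 three_ne_zero f := by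
  have h := MvPowerSeries.map_frobenius_expand 3 three_ne_zero (f := f)
  rw [ZMod.frobenius_zmod] at h
  rw [← h]
  simp [PowerSeries.expand]

/-- The power series `∑ a (3 n) q ^ n` extracted from `∑ a n q ^ n`. -/
noncomputable def trisect (f : (ZMod 3)⟦X⟧) : (ZMod 3)⟦X⟧ :=
  PowerSeries.mk fun n ↦ coeff (3 * n) f

lemma trisect_add (f g : (ZMod 3)⟦X⟧) : trisect (f + g) = trisect f + trisect g := by
  ext n
  simp [trisect]

lemma trisect_pow_three_mul (f g : (ZMod 3)⟦X⟧) : trisect (f ^ 3 * g) = f * trisect g := by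
  ext n
  rw [pow_three_eq_expand, trisect, coeff_mk, coeff_mul, coeff_mul]
  refine (sum_of_injOn (fun x ↦ (3 * x.1, 3 * x.2)) ?_ ?_ ?_ ?_).symm
  · rintro ⟨a, b⟩ _ ⟨c, d⟩ _ h
    simpa using h
  · rintro ⟨a, b⟩ h
    simp only [mem_coe, HasAntidiagonal.mem_antidiagonal] at *
    omega
  · rintro ⟨a, b⟩ h h'
    rw [HasAntidiagonal.mem_antidiagonal] at h
    rw [coeff_expand_of_not_dvd, zero_mul]
    rintro ⟨c, rfl⟩
    refine h' ⟨(c, n - c), ?_, ?_⟩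
    · simp only [mem_coe, HasAntidiagonal.mem_antidiagonal]
      omega
    · simp only [Prod.mk.injEq, true_and]
      omega
  · rintro ⟨a, b⟩ _
    simp [trisect, coeff_expand_mul]

/-- All exponents occurring in `f` are congruent to `r` modulo `3`. -/
def SuppMod (r : ZMod 3) (f : (ZMod 3)⟦X⟧) : Prop := ∀ n : ℕ, (n : ZMod 3) ≠ r → coeff n f = 0

lemma SuppMod.add {r : ZMod 3} {f g : (ZMod 3)⟦X⟧} (hf : SuppMod r f) (hg : SuppMod r g) :
    SuppMod r (f + g) := fun n hn ↦ by simp [hf n hn, hg n hn]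

lemma SuppMod.mul {r s t : ZMod 3} {f g : (ZMod 3)⟦X⟧} (hf : SuppMod r f) (hg : SuppMod s g)
    (ht : r + s = t) : SuppMod t (f * g) := by
  subst ht
  intro n hn
  rw [coeff_mul]
  refine sum_eq_zero fun x hx ↦ ?_
  rw [HasAntidiagonal.mem_antidiagonal] at hx
  by_cases h : (x.1 : ZMod 3) = r
  · rw [hg x.2 fun h' ↦ hn (by rw [← hx, Nat.cast_add, h, h']), mul_zero]
  · rw [hf x.1 h, zero_mul]

lemma suppMod_pow_three (f : (ZMod 3)⟦X⟧) : SuppMod 0 (f ^ 3) := fun n hn ↦ by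
  rw [pow_three_eq_expand, coeff_expand_of_not_dvd]
  rwa [Ne, ZMod.natCast_eq_zero_iff] at hn

lemma trisect_eq_zero {r : ZMod 3} {f : (ZMod 3)⟦X⟧} (hf : SuppMod r f) (hr : r ≠ 0) :
    trisect f = 0 := by
  ext n
  rw [trisect, coeff_mk, hf, map_zero]
  have h3 : (3 : ZMod 3) = 0 := rfl
  simpa [h3] using hr.symm

lemma trisect_pow_three {f : (ZMod 3)⟦X⟧} (hf : SuppMod 0 f) : trisect f ^ 3 = f := by
  ext n
  rw [pow_three_eq_expand]
  by_cases h : 3 ∣ n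
  · obtain ⟨m, rfl⟩ := h
    rw [coeff_expand_mul, trisect, coeff_mk]
  · rw [coeff_expand_of_not_dvd _ _ _ h, hf]
    rwa [Ne, ZMod.natCast_eq_zero_iff]

lemma thetaSum_pow_char_pow (N e : ℕ) :
    thetaSum (ZMod 3) N ^ 3 ^ e = ∑ k ∈ Icc (-N : ℤ) N, X ^ (3 ^ e * k.natAbs ^ 2) := by
  rw [thetaSum, sum_pow_char_pow]
  exact sum_congr rfl fun k _ ↦ by rw [← pow_mul, mul_comm]

lemma suppMod_theta_sub_pow_nine : SuppMod 1 (theta (ZMod 3) - theta (ZMod 3) ^ 9) := by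
  intro n hn
  have h : modX (ZMod 3) (n + 1) (theta (ZMod 3) - theta (ZMod 3) ^ 9) =
      modX (ZMod 3) (n + 1) (∑ k ∈ Icc (-(3 * n : ℕ) : ℤ) (3 * n : ℕ) with ¬ 3 ∣ k,
        X ^ (k.natAbs ^ 2)) := by
    rw [map_sub, map_pow]
    nth_rw 2 [modX_theta (ZMod 3) (le_refl (n + 1))]
    rw [modX_theta (ZMod 3) (show n + 1 ≤ 3 * n + 1 by omega), ← map_pow, ← map_sub]
    congr 1
    rw [show 9 = 3 ^ 2 by norm_num, thetaSum_pow_char_pow, thetaSum, sub_eq_iff_eq_add, add_comm,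
      ← sum_filter_add_sum_filter_not _ (fun k : ℤ ↦ 3 ∣ k)]
    congr 1
    refine sum_nbij' (fun k ↦ k / 3) (fun k ↦ 3 * k) ?_ ?_ ?_ ?_ ?_
    · intro k hk; simp only [mem_filter, mem_Icc] at *; omega
    · intro k hk; simp only [mem_filter, mem_Icc] at *; omega
    · intro k hk; simp only [mem_filter, mem_Icc] at *; omega
    · intro k hk; simp only [mem_Icc] at *; omega
    · intro k hk
      obtain ⟨-, l, rfl⟩ := mem_filter.1 hk
      rw [Int.mul_ediv_cancel_left _ three_ne_zero, Int.natAbs_mul, mul_pow]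
      rfl
  rw [modX_eq_iff.1 h n n.lt_succ_self, map_sum]
  refine sum_eq_zero fun k hk ↦ ?_
  rw [coeff_X_pow, if_neg]
  rintro rfl
  apply hn
  have hk := (mem_filter.1 hk).2
  rw [← Nat.cast_ofNat (n := 3), ← ZMod.intCast_zmod_eq_zero_iff_dvd] at hk
  have h3 : ((k.natAbs ^ 2 : ℕ) : ZMod 3) = (k : ZMod 3) ^ 2 := by
    rw [← Int.cast_natCast, Nat.cast_pow, Int.natAbs_sq, Int.cast_pow]
  rw [h3]
  generalize (k : ZMod 3) = t at hk
  revert t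
  decide

lemma suppMod_thetaNeg_sub_pow_nine : SuppMod 1 (thetaNeg (ZMod 3) - thetaNeg (ZMod 3) ^ 9) := by
  intro n hn
  rw [thetaNeg, ← map_pow, ← map_sub, coeff_rescale, suppMod_theta_sub_pow_nine n hn, mul_zero]

/-- The representations of `n` by the quadratic form `u ^ 2 + 3 * v ^ 2`. -/
noncomputable def reprs (n : ℕ) : Finset (ℤ × ℤ) :=
  {x ∈ Icc (-n : ℤ) n ×ˢ Icc (-n : ℤ) n | x.1 ^ 2 + 3 * x.2 ^ 2 = n}

lemma mem_reprs {n : ℕ} {x : ℤ × ℤ} : x ∈ reprs n ↔ x.1 ^ 2 + 3 * x.2 ^ 2 = n := by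
  simp only [reprs, mem_filter, mem_product, mem_Icc, and_iff_right_iff_imp]
  intro h
  have h1 := Int.natAbs_le_self_sq x.1
  have h2 := Int.natAbs_le_self_sq x.2
  have h3 := sq_nonneg x.1
  have h4 := sq_nonneg x.2
  omega

lemma coeff_theta_pow_four (n : ℕ) : coeff n (theta (ZMod 3) ^ 4) = (#(reprs n) : ZMod 3) := by
  have h : modX (ZMod 3) (n + 1) (theta (ZMod 3) ^ 4) =
      modX (ZMod 3) (n + 1) (thetaSum (ZMod 3) n * thetaSum (ZMod 3) n ^ 3 ^ 1) := by
    rw [map_pow, modX_theta _ le_rfl, ← map_pow]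
    congr 1
    ring
  rw [modX_eq_iff.1 h n n.lt_succ_self, thetaSum_pow_char_pow, thetaSum, sum_mul_sum,
    ← sum_product', map_sum, reprs, card_filter, Nat.cast_sum]
  refine sum_congr rfl fun x _ ↦ ?_
  rw [← pow_add, coeff_X_pow, Nat.cast_ite, Nat.cast_one, Nat.cast_zero]
  refine if_congr ?_ rfl rfl
  rw [eq_comm]
  zify
  simp [sq_abs]

lemma exists_eq_add_two_mul {u v : ℤ} {n : ℕ} (hn : Even n) (h : u ^ 2 + 3 * v ^ 2 = n) :
    ∃ w, u = v + 2 * w := by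
  have h2 : Even (u ^ 2 + 3 * v ^ 2) := by rw [h]; exact_mod_cast hn
  have h3 : Even (u - v) := by
    simp only [Int.even_add, Int.even_mul, Int.even_pow, Int.even_sub] at h2 ⊢
    have : ¬ Even (3 : ℤ) := by decide
    tauto
  obtain ⟨w, hw⟩ := h3
  exact ⟨w, by omega⟩

/-- Multiplication by a primitive cube root of unity permutes the representations of an even
number. -/
lemma three_dvd_card_reprs {n : ℕ} (hn : Even n) (h0 : n ≠ 0) : 3 ∣ #(reprs n) := by
  let f : Function.End (reprs n) := fun x ↦
    ⟨((-x.1.1 - 3 * x.1.2) / 2, (x.1.1 - x.1.2) / 2), by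
      obtain ⟨⟨u, v⟩, hx⟩ := x
      rw [mem_reprs] at hx ⊢
      dsimp only at *
      obtain ⟨w, rfl⟩ := exists_eq_add_two_mul hn hx
      rw [show (-(v + 2 * w) - 3 * v) / 2 = -2 * v - w by omega,
        show (v + 2 * w - v) / 2 = w by omega, ← hx]
      ring⟩
  have hf : ∀ x : reprs n, ((f x).1.1 * 2 = -x.1.1 - 3 * x.1.2) ∧ (f x).1.2 * 2 = x.1.1 - x.1.2 := by
    rintro ⟨⟨u, v⟩, hx⟩
    obtain ⟨w, hw : u = v + 2 * w⟩ := exists_eq_add_two_mul hn (mem_reprs.1 hx)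
    dsimp only [f]
    omega
  have hf3 : f ^ 3 ^ 1 = 1 := by
    funext x
    have h1 := hf x
    have h2 := hf (f x)
    have h3 := hf (f (f x))
    change f (f (f x)) = x
    ext <;> omega
  have h := Equiv.Perm.card_fixedPoints_modEq hf3
  have hempty : IsEmpty f.fixedPoints := by
    refine ⟨fun ⟨x, hx⟩ ↦ h0 ?_⟩
    have h1 := hf x
    rw [show f x = x from hx] at h1
    have h2 := mem_reprs.1 x.2
    rw [show x.1.1 = 0 by omega, show x.1.2 = 0 by omega] at h2
    simpa using h2.symm
  rw [Fintype.card_coe, Fintype.card_eq_zero] at h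
  exact (Nat.modEq_zero_iff_dvd).1 h

lemma constantCoeff_theta : constantCoeff (theta (ZMod 3)) = 1 := by
  rw [← coeff_zero_eq_constantCoeff_apply, theta, coeff_mk]
  simp

lemma theta_pow_four_add : theta (ZMod 3) ^ 4 + thetaNeg (ZMod 3) ^ 4 = 2 := by
  ext n
  rw [thetaNeg, ← map_pow, map_add, coeff_rescale]
  have h2 : coeff n (2 : (ZMod 3)⟦X⟧) = if n = 0 then 2 else 0 := by
    rw [show (2 : (ZMod 3)⟦X⟧) = C 2 from rfl, coeff_C]
  rw [h2]
  rcases Nat.even_or_odd n with h | h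
  · rcases eq_or_ne n 0 with rfl | h0
    · simp [constantCoeff_theta, one_add_one_eq_two]
    · rw [coeff_theta_pow_four, (ZMod.natCast_eq_zero_iff _ _).2 (three_dvd_card_reprs h h0), if_neg h0]
      simp
  · rw [h.neg_one_pow, if_neg (by rintro rfl; simp at h)]
    ring

lemma trisect_biregSeries : trisect biregSeries = thetaNeg (ZMod 3) ^ 4 := by
  have hG := biregSeries_mul_theta_pow_four
  have hadd := theta_pow_four_add
  have hα := suppMod_thetaNeg_sub_pow_nine
  have hβ := suppMod_theta_sub_pow_nine
  have hb : theta (ZMod 3) ≠ 0 := by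
    intro h
    simpa [h] using constantCoeff_theta
  generalize theta (ZMod 3) = b at *
  generalize thetaNeg (ZMod 3) = a at *
  set α := a - a ^ 9 with hα'
  set β := b - b ^ 9 with hβ'
  have hA : SuppMod 0 (a ^ 9) := by
    rw [show 9 = 3 * 3 from rfl, pow_mul]
    exact suppMod_pow_three _
  have hB : SuppMod 0 (b ^ 9) := by
    rw [show 9 = 3 * 3 from rfl, pow_mul]
    exact suppMod_pow_three _
  have hw := trisect_pow_three (f := α * (β * β)) (hα.mul (hβ.mul hβ rfl) (by decide))
  set w := trisect (α * (β * β)) with hw'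
  have hab : trisect (a * b ^ 2) = a ^ 3 * b ^ 6 + w := by
    have e : a * b ^ 2 = (a ^ 3 * b ^ 6) ^ 3 * 1 + α * (β * β) +
        (a ^ 9 * (b ^ 9 * β) + a ^ 9 * (b ^ 9 * β) + α * (b ^ 9 * b ^ 9)) +
        (a ^ 9 * (β * β) + (α * (b ^ 9 * β) + α * (b ^ 9 * β))) := by
      rw [hα', hβ']
      ring
    have hBβ := hB.mul hβ (zero_add 1)
    have s1 : SuppMod 1 (a ^ 9 * (b ^ 9 * β) + a ^ 9 * (b ^ 9 * β) + α * (b ^ 9 * b ^ 9)) :=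
      ((hA.mul hBβ (zero_add 1)).add (hA.mul hBβ (zero_add 1))).add
        (hα.mul (hB.mul hB (add_zero 0)) (add_zero 1))
    have s2 : SuppMod 2 (a ^ 9 * (β * β) + (α * (b ^ 9 * β) + α * (b ^ 9 * β))) :=
      (hA.mul (hβ.mul hβ one_add_one_eq_two) (zero_add 2)).add
        ((hα.mul hBβ one_add_one_eq_two).add (hα.mul hBβ one_add_one_eq_two))
    have one : trisect 1 = 1 := by
      ext n
      simp [trisect, coeff_one]
    rw [e, trisect_add, trisect_add, trisect_add, trisect_eq_zero s1 (by decide),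
      trisect_eq_zero s2 (by decide), trisect_pow_three_mul, one, ← hw']
    ring
  have hU : b ^ 4 * trisect biregSeries = a * b ^ 2 * (a ^ 3 * b ^ 6 + w) := by
    have e : (b ^ 4) ^ 3 * biregSeries = (a * b ^ 2) ^ 3 * (a * b ^ 2) := by
      linear_combination (b ^ 4) ^ 2 * hG
    rw [← hab, ← trisect_pow_three_mul, e, trisect_pow_three_mul]
  have h3 : (3 : (ZMod 3)⟦X⟧) = 0 := CharP.cast_eq_zero (ZMod 3)⟦X⟧ 3
  have hcube : a * b ^ 2 * w = a ^ 4 * b ^ 4 * (1 - b ^ 4) := by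
    apply frobenius_inj (ZMod 3)⟦X⟧ 3
    simp only [frobenius_def]
    have ea : a ^ 4 = 2 - b ^ 4 := by linear_combination hadd
    have e1 : (a * b ^ 2 * w) ^ 3 = a ^ 4 * (b ^ 4) ^ 2 * (1 - (a ^ 4) ^ 2) * (1 - (b ^ 4) ^ 2) ^ 2 := by
      rw [mul_pow, hw, hα', hβ']
      ring
    rw [e1, ea]
    generalize b ^ 4 = y
    linear_combination (-((2 - y) * y ^ 2 * (1 - y) ^ 3 *
      (9 - 6 * (2 - y) + (2 - y) ^ 2 - 3 * y + 2 * (2 - y) * y))) * h3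
  refine mul_left_cancel₀ (pow_ne_zero 4 hb) ?_
  rw [hU]
  linear_combination hcube

lemma not_isSquare_neg_three {p : ℕ} [Fact p.Prime] (hp5 : 5 ≤ p) (hp6 : p % 6 ≠ 1) (t : ZMod p) :
    t ^ 2 ≠ -3 := by
  intro ht
  have hp : p.Prime := Fact.out
  have hne : ∀ m : ℕ, 0 < m → m < 5 → (m : ZMod p) ≠ 0 := fun m h0 h5 h ↦ by
    rw [ZMod.natCast_eq_zero_iff] at h
    exact absurd (Nat.le_of_dvd h0 h) (by omega)
  have h2 : (2 : ZMod p) ≠ 0 := by exact_mod_cast hne 2 (by norm_num) (by norm_num)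
  have h3 : (3 : ZMod p) ≠ 0 := by exact_mod_cast hne 3 (by norm_num) (by norm_num)
  have hmod : p % 3 = 2 := by
    have h2' : ¬ 2 ∣ p := fun h ↦ by
      have := (Nat.prime_dvd_prime_iff_eq Nat.prime_two hp).1 h
      omega
    have h3' : ¬ 3 ∣ p := fun h ↦ by
      have := (Nat.prime_dvd_prime_iff_eq Nat.prime_three hp).1 h
      omega
    omega
  obtain ⟨w, hw⟩ : ∃ w : ZMod p, 2 * w = -1 + t := ⟨(-1 + t) / 2, by field_simp⟩
  have hw2 : w ^ 2 + w + 1 = 0 := by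
    refine (mul_eq_zero.1 (?_ : 4 * (w ^ 2 + w + 1) = 0)).resolve_left
      (by exact_mod_cast hne 4 (by norm_num) (by norm_num))
    linear_combination (2 * w + 1 + t) * hw + ht
  have hw3 : w ^ 3 = 1 := by linear_combination (w - 1) * hw2
  have hw0 : w ≠ 0 := by rintro rfl; simp at hw3
  have hw1 : w = 1 := by
    have h := ZMod.pow_card_sub_one_eq_one hw0
    rwa [show p - 1 = 3 * ((p - 1) / 3) + 1 by omega, pow_succ, pow_mul, hw3, one_pow,
      one_mul] at h
  rw [hw1] at hw2
  exact h3 (by linear_combination hw2)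

lemma dvd_of_dvd_sq_add_three_mul_sq {p : ℕ} (hp : p.Prime) (hp5 : 5 ≤ p) (hp6 : p % 6 ≠ 1)
    {u v : ℤ} (h : (p : ℤ) ∣ u ^ 2 + 3 * v ^ 2) : (p : ℤ) ∣ u ∧ (p : ℤ) ∣ v := by
  have : Fact p.Prime := ⟨hp⟩
  rw [← ZMod.intCast_zmod_eq_zero_iff_dvd] at h ⊢
  rw [← ZMod.intCast_zmod_eq_zero_iff_dvd]
  push_cast at h
  have hv : (v : ZMod p) = 0 := by
    by_contra hv
    refine not_isSquare_neg_three hp5 hp6 ((u : ZMod p) / v) ?_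
    field_simp
    linear_combination h
  refine ⟨?_, hv⟩
  rw [hv] at h
  simpa using h

/-- A number with odd `p`-adic valuation is not of the form `u ^ 2 + 3 * v ^ 2`. -/
lemma reprs_eq_empty {p : ℕ} (hp : p.Prime) (hp5 : 5 ≤ p) (hp6 : p % 6 ≠ 1) {c : ℕ}
    (hc : ¬ p ∣ c) {P : ℕ} (hP : 0 < P) : reprs (P ^ 2 * p * c) = ∅ := by
  refine eq_empty_of_forall_notMem fun x hx ↦ ?_
  obtain ⟨u, v⟩ := x
  replace hx : u ^ 2 + 3 * v ^ 2 = ((P ^ 2 * p * c : ℕ) : ℤ) := mem_reprs.1 hx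
  induction P using Nat.strong_induction_on generalizing u v with
  | _ P ih =>
  obtain ⟨⟨u, rfl⟩, v, rfl⟩ := dvd_of_dvd_sq_add_three_mul_sq hp hp5 hp6
    (u := u) (v := v) ⟨P ^ 2 * c, by rw [hx]; push_cast; ring⟩
  have hp0 : (p : ℤ) ≠ 0 := by exact_mod_cast hp.ne_zero
  have h1 : (p : ℤ) * (u ^ 2 + 3 * v ^ 2) = P ^ 2 * c := by
    apply mul_left_cancel₀ hp0
    push_cast at hx
    linear_combination hx
  have h2 : p ∣ P ^ 2 * c := by
    zify
    exact ⟨_, h1.symm⟩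
  obtain ⟨Q, rfl⟩ := hp.dvd_of_dvd_pow ((hp.dvd_mul.1 h2).resolve_right hc)
  have hQ : 0 < Q := Nat.pos_of_mul_pos_left hP
  refine ih Q (lt_mul_of_one_lt_left hQ hp.one_lt) hQ u v ?_
  apply mul_left_cancel₀ hp0
  push_cast at h1 ⊢
  linear_combination h1

lemma natCast_biregOverpartitions_three_mul (M : ℕ) :
    (biregOverpartitions 2 9 (3 * M) : ZMod 3) = (-1) ^ M * #(reprs M) := by
  have h := congrArg (coeff M) trisect_biregSeries
  rwa [thetaNeg, ← map_pow, coeff_rescale, coeff_theta_pow_four, trisect, coeff_mk, biregSeries,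
    coeff_mk] at h

theorem B29_inf_family_mod3 (k n : ℕ) (p : Fin (k + 2) → ℕ)
    (hp : ∀ i, (p i).Prime ∧ 5 ≤ p i ∧ p i % 6 ≠ 1)
    (j : ℕ) (hj : 0 < j) (hjp : ¬ p (Fin.last (k + 1)) ∣ j) :
    3 ∣ biregOverpartitions 2 9
      (18 * (∏ i, p i ^ 2) * n +
        (6 * j + p (Fin.last (k + 1))) * 3 * (∏ i : Fin (k + 1), p i.castSucc ^ 2) *
          p (Fin.last (k + 1))) := by
  obtain ⟨hq, hq5, hq6⟩ := hp (Fin.last (k + 1))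
  set q := p (Fin.last (k + 1)) with hqdef
  have hP : 0 < ∏ i : Fin (k + 1), p i.castSucc := prod_pos fun i _ ↦ (hp i.castSucc).1.pos
  set P := ∏ i : Fin (k + 1), p i.castSucc with hPdef
  have hc : ¬ q ∣ 6 * (q * n) + 6 * j + q := by
    rw [← Nat.dvd_add_iff_left dvd_rfl,
      ← Nat.dvd_add_iff_right ((dvd_mul_right q n).mul_left 6), hq.dvd_mul]
    rintro (h | h)
    · have := Nat.le_of_dvd (by norm_num) h
      interval_cases q
      · omega
      · exact absurd hq (by norm_num)
    · exact hjp h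
  rw [Fin.prod_univ_castSucc, prod_pow, ← hqdef, ← hPdef,
    show 18 * (P ^ 2 * q ^ 2) * n + (6 * j + q) * 3 * P ^ 2 * q =
      3 * (P ^ 2 * q * (6 * (q * n) + 6 * j + q)) by ring,
    ← ZMod.natCast_eq_zero_iff, natCast_biregOverpartitions_three_mul,
    reprs_eq_empty hq hq5 hq6 hc hP]
  simp
end

section
/- For all integers n ≥ 0, the number of (5,2)-biregular overpartitions of 4n+3 satisfies B̄_{5,2}(4n+3) ≡ 0 (mod 4). -/
/-- The partitions of `N ≠ 0` into equal parts of a size satisfying `P` correspond to the divisors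
of `N` satisfying `P`. -/
theorem card_partition_one_part_size {N : ℕ} (hN : N ≠ 0) (P : ℕ → Prop) [DecidablePred P] :
    (Finset.univ.filter fun p : Nat.Partition N =>
      (∀ x ∈ p.parts, P x) ∧ p.parts.toFinset.card = 1).card = (N.divisors.filter P).card := by
  symm
  refine Finset.card_bij (fun d hd => ⟨Multiset.replicate (N / d) d, ?_, ?_⟩) ?_ ?_ ?_
  · intro i hi
    rw [Multiset.eq_of_mem_replicate hi]
    exact Nat.pos_of_mem_divisors (Finset.mem_filter.1 hd).1
  · rw [Multiset.sum_replicate, smul_eq_mul]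
    exact Nat.div_mul_cancel (Nat.dvd_of_mem_divisors (Finset.mem_filter.1 hd).1)
  · intro d hd
    obtain ⟨hd, hP⟩ := Finset.mem_filter.1 hd
    have hk : N / d ≠ 0 :=
      (Nat.div_pos (Nat.divisor_le hd) (Nat.pos_of_mem_divisors hd)).ne'
    simp only [Finset.mem_filter, Finset.mem_univ, true_and]
    refine ⟨fun x hx => Multiset.eq_of_mem_replicate hx ▸ hP, ?_⟩
    rw [← Multiset.nsmul_singleton, Multiset.toFinset_nsmul _ _ hk]
    simp
  · intro d hd e he h
    have hd := (Finset.mem_filter.1 hd).1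
    have hk : N / d ≠ 0 :=
      (Nat.div_pos (Nat.divisor_le hd) (Nat.pos_of_mem_divisors hd)).ne'
    have hmem : d ∈ Multiset.replicate (N / e) e := by
      have hparts : Multiset.replicate (N / d) d = Multiset.replicate (N / e) e :=
        congrArg Nat.Partition.parts h
      rw [← hparts]
      exact Multiset.mem_replicate.2 ⟨hk, rfl⟩
    exact Multiset.eq_of_mem_replicate hmem
  · intro p hp
    simp only [Finset.mem_filter, Finset.mem_univ, true_and] at hp
    obtain ⟨hP, hp⟩ := hp
    obtain ⟨d, hd⟩ := Finset.card_eq_one.1 hp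
    have hmem : d ∈ p.parts := by simp [← Multiset.mem_toFinset, hd]
    have hrep : p.parts = Multiset.replicate p.parts.card d :=
      Multiset.eq_replicate_card.2 fun x hx => by
        simpa [hd] using Multiset.mem_toFinset.2 hx
    have hsum : p.parts.card * d = N := by
      rw [← smul_eq_mul, ← Multiset.sum_replicate, ← hrep, p.parts_sum]
    refine ⟨d, Finset.mem_filter.2 ⟨Nat.mem_divisors.2 ⟨⟨_, (mul_comm _ _).trans hsum |>.symm⟩, hN⟩,
      hP d hmem⟩, ?_⟩
    ext1
    change Multiset.replicate (N / d) d = p.parts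
    rw [Nat.div_eq_of_eq_mul_left (p.parts_pos hmem) hsum.symm, ← hrep]

/-- Modulo `4`, only the partitions with a single part size contribute. -/
theorem biregOverpartitions_modEq_four (l1 l2 : ℕ) {N : ℕ} (hN : N ≠ 0) :
    biregOverpartitions l1 l2 N ≡
      2 * (N.divisors.filter fun d => ¬ l1 ∣ d ∧ ¬ l2 ∣ d).card [MOD 4] := by
  rw [← card_partition_one_part_size hN, Finset.card_filter, Finset.mul_sum, biregOverpartitions]
  refine Nat.ModEq.sum fun p _ => ?_
  by_cases hP : ∀ x ∈ p.parts, ¬ l1 ∣ x ∧ ¬ l2 ∣ x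
  · rw [if_pos hP]
    have h0 : p.parts.toFinset.card ≠ 0 := by
      intro h
      rw [Finset.card_eq_zero, Multiset.toFinset_eq_empty] at h
      exact hN (by rw [← p.parts_sum, h, Multiset.sum_zero])
    by_cases h1 : p.parts.toFinset.card = 1
    · rw [if_pos ⟨hP, h1⟩, h1]
      rfl
    · rw [if_neg fun h => h1 h.2]
      exact (Nat.modEq_zero_iff_dvd).2 (pow_dvd_pow 2 (by omega : 2 ≤ p.parts.toFinset.card))
  · rw [if_neg hP, if_neg fun h => hP h.1]
    rfl

/-- A number that is not a square has an even number of divisors. -/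
theorem even_card_divisors_of_not_isSquare {m : ℕ} (hm : ¬ IsSquare m) :
    Even m.divisors.card := by
  rw [← ZMod.natCast_eq_zero_iff_even, Finset.card_eq_sum_ones, Nat.cast_sum]
  refine Finset.sum_involution (fun d _ => m / d) (fun _ _ => by decide) ?_ ?_ ?_
  · intro d hd _ h
    refine hm ⟨d, ?_⟩
    nth_rw 1 [← Nat.div_mul_cancel (Nat.dvd_of_mem_divisors hd), h]
  · intro d hd
    exact Nat.mem_divisors.2
      ⟨Nat.div_dvd_of_dvd (Nat.dvd_of_mem_divisors hd), (Nat.mem_divisors.1 hd).2⟩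
  · intro d hd
    exact Nat.div_div_self (Nat.dvd_of_mem_divisors hd) (Nat.mem_divisors.1 hd).2

theorem B52_mod4_4n3 (n : ℕ) : 4 ∣ biregOverpartitions 5 2 (4 * n + 3) := by
  obtain ⟨a, m, hm5, hN⟩ :=
    Nat.exists_eq_pow_mul_and_not_dvd (n := 4 * n + 3) (by omega) 5 (by norm_num)
  have hm : m % 4 = 3 := by
    have h5 : 5 ^ a * m ≡ 1 ^ a * m [MOD 4] :=
      ((by decide : 5 ≡ 1 [MOD 4]).pow a).mul_right m
    rw [← hN, one_pow, one_mul, Nat.ModEq] at h5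
    omega
  have hdiv : ((4 * n + 3).divisors.filter fun d => ¬ 5 ∣ d ∧ ¬ 2 ∣ d) = m.divisors := by
    ext d
    simp only [Finset.mem_filter, Nat.mem_divisors]
    constructor
    · rintro ⟨⟨hd, -⟩, h5, -⟩
      have hcop : Nat.Coprime d (5 ^ a) :=
        (((Nat.Prime.coprime_iff_not_dvd (by norm_num)).2 h5).symm).pow_right a
      exact ⟨hcop.dvd_of_dvd_mul_left (hN ▸ hd), by omega⟩
    · rintro ⟨hd, -⟩
      refine ⟨⟨hN ▸ hd.mul_left _, by omega⟩, fun h => hm5 (h.trans hd), fun h => ?_⟩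
      have := h.trans hd
      omega
  have hsq : ¬ IsSquare m := by
    rintro ⟨r, rfl⟩
    have hr : r % 4 < 4 := Nat.mod_lt _ (by norm_num)
    rw [Nat.mul_mod] at hm
    interval_cases r % 4 <;> omega
  have h := biregOverpartitions_modEq_four 5 2 (N := 4 * n + 3) (by omega)
  rw [hdiv] at h
  refine (Nat.modEq_zero_iff_dvd).1 (h.trans ((Nat.modEq_zero_iff_dvd).2 ?_))
  obtain ⟨k, hk⟩ := even_card_divisors_of_not_isSquare hsq
  omega
end

section
/- For all integers n ≥ 0, the number of (8,3)-biregular overpartitions of 36n+33 satisfies B̄_{8,3}(36n+33) ≡ 0 (mod 3). -/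
namespace BiregularOverpartition

open PowerSeries PowerSeries.WithPiTopology Filter Topology

theorem continuous_expand (p : ℕ) (hp : p ≠ 0) :
    Continuous (expand p hp : (ZMod 3)⟦X⟧ →ₐ[ZMod 3] (ZMod 3)⟦X⟧) := by
  refine continuous_iff_continuousAt.2 fun f ↦ (tendsto_iff_coeff_tendsto _ _ _ _).2 fun d ↦ ?_
  simp_rw [coeff_expand]
  split_ifs
  · exact (continuous_coeff (ZMod 3) (d / p)).tendsto f
  · exact tendsto_const_nhds

theorem continuous_evalNegHom :
    Continuous (evalNegHom : (ZMod 3)⟦X⟧ →+* (ZMod 3)⟦X⟧) := by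
  refine continuous_iff_continuousAt.2 fun f ↦ (tendsto_iff_coeff_tendsto _ _ _ _).2 fun d ↦ ?_
  simp_rw [evalNegHom, coeff_rescale]
  exact ((continuous_coeff (ZMod 3) d).tendsto f).const_mul _

instance : CharP (ZMod 3)⟦X⟧ 3 :=
  charP_of_injective_ringHom (C_injective (R := ZMod 3)) 3

theorem expand_three (f : (ZMod 3)⟦X⟧) : expand 3 three_ne_zero f = f ^ 3 := by
  have h := hasSum_of_monomials_self f
  have h1 := h.map (expand 3 three_ne_zero) (continuous_expand 3 _)
  have h2 := h.map (frobenius (ZMod 3)⟦X⟧ 3) (continuous_pow 3)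
  refine h1.unique ?_
  convert! h2 using 1
  ext1 n
  simp only [Function.comp, expand_monomial, frobenius_def, monomial_pow, ZMod.pow_card]

theorem evalNegHom_expand_of_odd {p : ℕ} (hp : p ≠ 0) (hodd : Odd p) (f : (ZMod 3)⟦X⟧) :
    evalNegHom (expand p hp f) = expand p hp (evalNegHom f) := by
  ext n
  simp only [evalNegHom, coeff_rescale, coeff_expand]
  split_ifs with h
  · obtain ⟨m, rfl⟩ := h
    rw [Nat.mul_div_cancel_left _ (Nat.pos_of_ne_zero hp), pow_mul, hodd.neg_one_pow]
  · simp

/-- The power series `f` only involves monomials whose exponent is congruent to `r` modulo `d`. -/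
def SupportedOn (d : ℕ) (r : ZMod d) (f : (ZMod 3)⟦X⟧) : Prop :=
  ∀ n : ℕ, (n : ZMod d) ≠ r → coeff n f = 0

namespace SupportedOn

variable {d : ℕ} {r s : ZMod d} {f g : (ZMod 3)⟦X⟧}

theorem add (hf : SupportedOn d r f) (hg : SupportedOn d r g) : SupportedOn d r (f + g) :=
  fun n hn ↦ by rw [map_add, hf n hn, hg n hn, add_zero]

theorem mul (hf : SupportedOn d r f) (hg : SupportedOn d s g) : SupportedOn d (r + s) (f * g) := by
  intro n hn
  rw [coeff_mul]
  refine Finset.sum_eq_zero fun p hp ↦ ?_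
  rw [Finset.HasAntidiagonal.mem_antidiagonal] at hp
  by_cases h : (p.1 : ZMod d) = r
  · rw [hg p.2 ?_, mul_zero]
    rintro rfl
    exact hn (by rw [← hp, Nat.cast_add, h])
  · rw [hf p.1 h, zero_mul]

theorem expand (hd : d ≠ 0) (f : (ZMod 3)⟦X⟧) : SupportedOn d 0 (expand d hd f) :=
  fun n hn ↦ coeff_expand_of_not_dvd d hd f (by rwa [Ne, ZMod.natCast_eq_zero_iff] at hn)

theorem X_pow (k : ℕ) : SupportedOn d k (X ^ k) := by
  intro n hn
  rw [coeff_X_pow, if_neg (by rintro rfl; exact hn rfl)]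

end SupportedOn

theorem finite_fiber_of_hasSum {ι : Type*} {e : ι → ℕ} {f : (ZMod 3)⟦X⟧}
    (hf : HasSum (fun i ↦ (X : (ZMod 3)⟦X⟧) ^ e i) f) (n : ℕ) : {i | e i = n}.Finite := by
  have h := ((hasSum_iff_hasSum_coeff (ZMod 3)).1 hf n).summable
  refine h.hasFiniteSupport_of_discreteTopology.subset fun i hi ↦ ?_
  simp_all [coeff_X_pow]

theorem hasSum_X_pow_mul {ι κ : Type*} {e : ι → ℕ} {e' : κ → ℕ} {f g : (ZMod 3)⟦X⟧}
    (hf : HasSum (fun i ↦ (X : (ZMod 3)⟦X⟧) ^ e i) f) (hg : HasSum (fun i ↦ X ^ e' i) g) :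
    HasSum (fun p : ι × κ ↦ X ^ (e p.1 + e' p.2)) (f * g) := by
  suffices h : Summable fun p : ι × κ ↦ (X : (ZMod 3)⟦X⟧) ^ e p.1 * X ^ e' p.2 by
    have := HasSum.mul (f := fun i ↦ (X : (ZMod 3)⟦X⟧) ^ e i)
      (g := fun i ↦ (X : (ZMod 3)⟦X⟧) ^ e' i) hf hg h
    simpa only [pow_add] using this
  refine (summable_iff_summable_coeff _).2 fun n ↦ ?_
  refine summable_of_hasFiniteSupport (Set.Finite.subset ((Finset.range (n + 1)).finite_toSet.biUnion
    fun m _ ↦ (finite_fiber_of_hasSum hf m).prod (finite_fiber_of_hasSum hg (n - m))) ?_)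
  intro p hp
  simp only [Function.mem_support, ← pow_add, coeff_X_pow] at hp
  simp only [Finset.coe_range, Set.mem_iUnion, Set.mem_prod, Set.mem_ofPred_eq, Set.mem_Iio]
  exact ⟨e p.1, by grind⟩

theorem hasSum_X_pow_of_injective {e : ℕ → ℕ} (he : Function.Injective e) :
    HasSum (fun k ↦ (X : (ZMod 3)⟦X⟧) ^ e k)
      (PowerSeries.mk (Set.indicator (Set.range e) 1)) := by
  classical
  refine (hasSum_iff_hasSum_coeff _).2 fun d ↦ ?_
  simp only [coeff_X_pow, coeff_mk]
  by_cases h : d ∈ Set.range e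
  · obtain ⟨k, rfl⟩ := h
    simpa [he.eq_iff, eq_comm] using hasSum_ite_eq k (1 : ZMod 3)
  · simp only [Set.indicator_of_notMem h]
    convert hasSum_zero using 2 with k
    rw [if_neg (by rintro rfl; exact h ⟨k, rfl⟩)]

/-- The series `∑ X ^ (k ^ 2)` over all integers `k`. -/
noncomputable def phi : (ZMod 3)⟦X⟧ :=
  2 * PowerSeries.mk (Set.indicator (Set.range fun k : ℕ ↦ k ^ 2) 1) - 1

/-- The series `∑ (-1) ^ k * X ^ (k ^ 2)` over all integers `k`. -/
noncomputable def phiNeg : (ZMod 3)⟦X⟧ := evalNegHom phi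

/-- The series `∑ X ^ (k * (k + 1))` over all natural numbers `k`. -/
noncomputable def psi : (ZMod 3)⟦X⟧ :=
  PowerSeries.mk (Set.indicator (Set.range fun k : ℕ ↦ k * (k + 1)) 1)

theorem hasSum_sq : HasSum (fun k : ℕ ↦ (X : (ZMod 3)⟦X⟧) ^ k ^ 2)
    (PowerSeries.mk (Set.indicator (Set.range fun k : ℕ ↦ k ^ 2) 1)) :=
  hasSum_X_pow_of_injective (Nat.pow_left_injective two_ne_zero)

theorem hasSum_psi : HasSum (fun k : ℕ ↦ (X : (ZMod 3)⟦X⟧) ^ (k * (k + 1))) psi :=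
  hasSum_X_pow_of_injective (StrictMono.injective fun a b h ↦ by nlinarith)

theorem hasSum_phi_int : HasSum (fun k : ℤ ↦ (X : (ZMod 3)⟦X⟧) ^ k.natAbs ^ 2) phi := by
  have h := HasSum.of_nat_of_neg (f := fun k : ℤ ↦ (X : (ZMod 3)⟦X⟧) ^ k.natAbs ^ 2)
    (by simpa using hasSum_sq) (by simpa using hasSum_sq)
  convert! h using 1
  simp [phi, two_mul]

theorem hasSum_two_mul_psi_int :
    HasSum (fun k : ℤ ↦ (X : (ZMod 3)⟦X⟧) ^ (k * (k + 1)).toNat) (2 * psi) := by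
  rw [two_mul]
  refine HasSum.of_nat_of_neg_add_one ?_ ?_
  · convert hasSum_psi using 3 with k
    norm_cast
  · convert hasSum_psi using 3 with k
    rw [show (-((k : ℤ) + 1)) * (-((k : ℤ) + 1) + 1) = ((k * (k + 1) : ℕ) : ℤ) by push_cast; ring]
    rfl

theorem hasSum_expand {ι : Type*} {e : ι → ℕ} {f : (ZMod 3)⟦X⟧} (p : ℕ) (hp : p ≠ 0)
    (hf : HasSum (fun i ↦ (X : (ZMod 3)⟦X⟧) ^ e i) f) :
    HasSum (fun i ↦ (X : (ZMod 3)⟦X⟧) ^ (p * e i)) (expand p hp f) := by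
  simpa only [Function.comp_def, map_pow, expand_X, ← pow_mul] using
    hf.map (expand p hp) (continuous_expand p hp)

theorem toNat_hexagonal_even (x z : ℤ) :
    ((x - z) ^ 2 + (x - z) * (2 * z) + (2 * z) ^ 2).toNat = x.natAbs ^ 2 + 3 * z.natAbs ^ 2 := by
  zify
  rw [Int.toNat_of_nonneg (by nlinarith [sq_nonneg x, sq_nonneg z]), sq_abs, sq_abs]
  ring

theorem toNat_hexagonal_odd (x z : ℤ) :
    ((x - z) ^ 2 + (x - z) * (2 * z + 1) + (2 * z + 1) ^ 2).toNat =
      (x * (x + 1)).toNat + 3 * (z * (z + 1)).toNat + 1 := by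
  have h (x : ℤ) : 0 ≤ x * (x + 1) := by
    rcases lt_or_ge x 0 with h | h <;> nlinarith
  zify
  rw [Int.toNat_of_nonneg (by nlinarith [h x, h z]), Int.toNat_of_nonneg (h x),
    Int.toNat_of_nonneg (h z)]
  ring

/-- The pairs of integers split according to the parity of the second entry. -/
def hexagonalEquiv : (ℤ × ℤ) ⊕ (ℤ × ℤ) ≃ ℤ × ℤ where
  toFun := Sum.elim (fun p ↦ (p.1 - p.2, 2 * p.2)) (fun p ↦ (p.1 - p.2, 2 * p.2 + 1))
  invFun p := if p.2 % 2 = 0 then .inl (p.1 + p.2 / 2, p.2 / 2) else .inr (p.1 + p.2 / 2, p.2 / 2)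
  left_inv p := by
    rcases p with ⟨x, z⟩ | ⟨x, z⟩
    · simp
    · have : (2 * z + 1) / 2 = z := by omega
      have h : (2 * z + 1) % 2 = 1 := by omega
      simp [this, h]
  right_inv p := by
    obtain ⟨x, y⟩ := p
    dsimp only
    split_ifs with h <;> simp only [Sum.elim_inl, Sum.elim_inr, Prod.mk.injEq] <;> omega

/-- The theta series of the hexagonal lattice in terms of one-dimensional theta series. -/
theorem hasSum_hexagonal :
    HasSum (fun p : ℤ × ℤ ↦ (X : (ZMod 3)⟦X⟧) ^ (p.1 ^ 2 + p.1 * p.2 + p.2 ^ 2).toNat)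
      (phi * expand 3 three_ne_zero phi + 2 * psi * expand 3 three_ne_zero (2 * psi) * X) := by
  rw [← hexagonalEquiv.hasSum_iff]
  refine HasSum.sum ?_ ?_
  · simpa only [Function.comp_def, hexagonalEquiv, Equiv.coe_fn_mk, Sum.elim_inl,
      toNat_hexagonal_even] using
      hasSum_X_pow_mul hasSum_phi_int (hasSum_expand 3 three_ne_zero hasSum_phi_int)
  · simpa only [Function.comp_def, hexagonalEquiv, Equiv.coe_fn_mk, Sum.elim_inr,
      toNat_hexagonal_odd, pow_succ (X : (ZMod 3)⟦X⟧)] using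
      (hasSum_X_pow_mul hasSum_two_mul_psi_int
        (hasSum_expand 3 three_ne_zero hasSum_two_mul_psi_int)).mul_right X

/-- Rotation of order three shows that the number of vectors of a given nonzero norm in the
hexagonal lattice is a multiple of three. -/
theorem three_dvd_card_hexagonal {n : ℕ} (hn : n ≠ 0) (s : Finset (ℤ × ℤ))
    (hs : ∀ p : ℤ × ℤ, p ∈ s ↔ (p.1 ^ 2 + p.1 * p.2 + p.2 ^ 2).toNat = n) : 3 ∣ s.card := by
  have hrot (p : ℤ × ℤ) (hp : p ∈ s) : (p.2, -p.1 - p.2) ∈ s := by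
    rw [hs] at hp ⊢
    rw [← hp]
    congr 1
    ring
  let f : Function.End s := fun p ↦ ⟨(p.1.2, -p.1.1 - p.1.2), hrot p.1 p.2⟩
  have hf : f ^ 3 ^ 1 = 1 := by
    rw [pow_one, pow_succ, pow_two]
    refine funext fun p ↦ Subtype.ext (Prod.ext ?_ ?_)
    · change -p.1.2 - (-p.1.1 - p.1.2) = p.1.1
      ring
    · change -(-p.1.1 - p.1.2) - (-p.1.2 - (-p.1.1 - p.1.2)) = p.1.2
      ring
  have := Equiv.Perm.card_fixedPoints_modEq hf
  have hfix : IsEmpty (Function.fixedPoints f) := by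
    refine ⟨fun ⟨⟨⟨x, y⟩, h⟩, hx⟩ ↦ hn ?_⟩
    simp only [Function.mem_fixedPoints, Function.IsFixedPt, f, Subtype.mk.injEq,
      Prod.mk.injEq] at hx
    obtain rfl : x = 0 := by omega
    obtain rfl : y = 0 := by omega
    simpa using ((hs _).1 h).symm
  rw [Fintype.card_coe, Fintype.card_eq_zero_iff.2 hfix] at this
  exact Nat.modEq_zero_iff_dvd.1 this

theorem phi_mul_expand_add : phi * expand 3 three_ne_zero phi +
    2 * psi * expand 3 three_ne_zero (2 * psi) * X = 1 := by
  ext n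
  have h := (hasSum_iff_hasSum_coeff _).1 hasSum_hexagonal n
  have hfin := finite_fiber_of_hasSum hasSum_hexagonal n
  have hsum : HasSum (fun p : ℤ × ℤ ↦
      coeff n ((X : (ZMod 3)⟦X⟧) ^ (p.1 ^ 2 + p.1 * p.2 + p.2 ^ 2).toNat))
      (hfin.toFinset.card : ZMod 3) := by
    convert hasSum_sum_of_ne_finset_zero (s := hfin.toFinset)
      (L := SummationFilter.unconditional (ℤ × ℤ)) ?_ using 1
    · rw [Finset.cast_card]
      refine Finset.sum_congr rfl fun p hp ↦ ?_
      simp_all [coeff_X_pow]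
    · intro p hp
      simp only [Set.Finite.mem_toFinset, Set.mem_ofPred_eq] at hp
      rw [coeff_X_pow, if_neg (Ne.symm hp)]
  rw [h.unique hsum, coeff_one]
  split_ifs with hn
  · subst hn
    have : hfin.toFinset = {(0, 0)} := by
      ext ⟨x, y⟩
      simp only [Set.Finite.mem_toFinset, Set.mem_ofPred_eq, Finset.mem_singleton, Prod.mk.injEq,
        Int.toNat_eq_zero]
      constructor
      · intro h
        constructor <;> nlinarith [sq_nonneg (x + y), sq_nonneg x, sq_nonneg y]
      · rintro ⟨rfl, rfl⟩
        simp
    rw [this, Finset.card_singleton, Nat.cast_one]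
  · exact (ZMod.natCast_eq_zero_iff _ _).2 (three_dvd_card_hexagonal hn _ (by simp))

theorem evalNegHom_psi : evalNegHom psi = psi := by
  ext n
  rw [evalNegHom, coeff_rescale, psi, coeff_mk]
  by_cases h : n ∈ Set.range fun k : ℕ ↦ k * (k + 1)
  · obtain ⟨k, rfl⟩ := h
    rw [(Nat.even_mul_succ_self k).neg_one_pow, one_mul]
  · simp [h]

theorem three_eq_zero : (3 : (ZMod 3)⟦X⟧) = 0 := by
  exact_mod_cast CharP.cast_eq_zero (ZMod 3)⟦X⟧ 3

theorem phiNeg_pow_four : phiNeg ^ 4 = 1 + X * psi ^ 4 := by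
  have h := congrArg evalNegHom phi_mul_expand_add
  rw [map_add, map_mul, map_mul, map_mul, map_one, evalNegHom_expand_of_odd _ (by decide),
    evalNegHom_expand_of_odd _ (by decide), map_mul, map_ofNat, evalNegHom_psi, evalNegHom_X,
    ← phiNeg, expand_three, expand_three] at h
  linear_combination h + 5 * X * psi ^ 4 * three_eq_zero

theorem coeff_phi (n : ℕ) :
    coeff n phi = 2 * Set.indicator (Set.range fun k : ℕ ↦ k ^ 2) 1 n - if n = 0 then 1 else 0 := by
  rw [phi, map_sub, coeff_one, show (2 : (ZMod 3)⟦X⟧) = C 2 from rfl, coeff_C_mul, coeff_mk]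

theorem coeff_phiNeg (n : ℕ) : coeff n phiNeg = (-1) ^ n * coeff n phi := by
  rw [phiNeg, evalNegHom, coeff_rescale]

theorem indicator_eq_of_iff {s t : Set ℕ} {a b : ℕ} (h : a ∈ s ↔ b ∈ t) :
    s.indicator (1 : ℕ → ZMod 3) a = t.indicator 1 b := by
  classical
  simp only [Set.indicator_apply, h, Pi.one_apply]

theorem mod_four_of_sq {n k : ℕ} (h : k ^ 2 = n) : n % 4 = 0 ∨ n % 4 = 1 := by
  subst h
  rcases Nat.even_or_odd' k with ⟨m, rfl | rfl⟩
  · left; ring_nf; omega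
  · right; ring_nf; omega

theorem phiNeg_eq_expand_four :
    phiNeg = expand 4 four_ne_zero phi + X * expand 4 four_ne_zero psi := by
  ext n
  rw [coeff_phiNeg, map_add]
  obtain ⟨m, hm⟩ : ∃ m, n = 4 * m ∨ n = 4 * m + 1 ∨ n = 4 * m + 2 ∨ n = 4 * m + 3 :=
    ⟨n / 4, by omega⟩
  rcases hm with rfl | rfl | rfl | rfl
  · have h1 : coeff (4 * m) (X * expand 4 four_ne_zero psi) = 0 := by
      cases m with
      | zero => simp
      | succ m =>
        rw [show 4 * (m + 1) = (4 * m + 3) + 1 by ring, coeff_succ_X_mul,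
          coeff_expand_of_not_dvd _ _ _ (by omega)]
    rw [coeff_expand_mul, h1, coeff_phi, coeff_phi, Even.neg_one_pow ⟨2 * m, by ring⟩,
      indicator_eq_of_iff (t := Set.range fun k : ℕ ↦ k ^ 2) (b := m)]
    · simp
    · constructor
      · rintro ⟨k, hk⟩
        rcases Nat.even_or_odd' k with ⟨l, rfl | rfl⟩
        · exact ⟨l, by dsimp only at hk ⊢; nlinarith⟩
        · ring_nf at hk; omega
      · rintro ⟨k, rfl⟩
        exact ⟨2 * k, by ring⟩
  · rw [coeff_succ_X_mul, coeff_expand_mul, coeff_expand_of_not_dvd _ _ _ (by omega), coeff_phi,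
      Odd.neg_one_pow ⟨2 * m, by ring⟩, psi, coeff_mk,
      indicator_eq_of_iff (t := Set.range fun k : ℕ ↦ k * (k + 1)) (b := m)]
    · simp only [Nat.add_eq_zero_iff, one_ne_zero, and_false, if_false]
      generalize Set.indicator (Set.range fun k : ℕ ↦ k * (k + 1)) (1 : ℕ → ZMod 3) m = a
      revert a
      decide
    · constructor
      · rintro ⟨k, hk⟩
        rcases Nat.even_or_odd' k with ⟨l, rfl | rfl⟩
        · ring_nf at hk; omega
        · exact ⟨l, by dsimp only at hk ⊢; nlinarith⟩
      · rintro ⟨k, rfl⟩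
        exact ⟨2 * k + 1, by ring⟩
  · rw [coeff_succ_X_mul, coeff_expand_of_not_dvd _ _ _ (by omega),
      coeff_expand_of_not_dvd _ _ _ (by omega), coeff_phi, Set.indicator_of_notMem]
    · simp
    · rintro ⟨k, hk⟩
      have := mod_four_of_sq hk
      omega
  · rw [coeff_succ_X_mul, coeff_expand_of_not_dvd _ _ _ (by omega),
      coeff_expand_of_not_dvd _ _ _ (by omega), coeff_phi, Set.indicator_of_notMem]
    · simp
    · rintro ⟨k, hk⟩
      have := mod_four_of_sq hk
      omega

theorem pow_nine (f : (ZMod 3)⟦X⟧) :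
    f ^ 9 = expand 3 three_ne_zero (expand 3 three_ne_zero f) := by
  rw [expand_three, expand_three, ← pow_mul]

theorem exists_eq_three_mul_add (k : ℕ) : ∃ l, k = 3 * l ∨ k = 3 * l + 1 ∨ k = 3 * l + 2 :=
  ⟨k / 3, by omega⟩

theorem supportedOn_phiNeg_sub : SupportedOn 3 1 (phiNeg - phiNeg ^ 9) := by
  intro n hn
  rw [pow_nine, map_sub, sub_eq_zero]
  obtain ⟨m, rfl | rfl | rfl⟩ := exists_eq_three_mul_add n
  · rw [coeff_expand_mul]
    by_cases hm : 3 ∣ m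
    · obtain ⟨l, rfl⟩ := hm
      rw [coeff_expand_mul, coeff_phiNeg, coeff_phiNeg, coeff_phi, coeff_phi,
        indicator_eq_of_iff (t := Set.range fun k : ℕ ↦ k ^ 2) (b := l)]
      · rw [pow_mul, pow_mul]
        norm_num
      · constructor
        · rintro ⟨k, hk⟩
          obtain ⟨j, rfl | rfl | rfl⟩ := exists_eq_three_mul_add k
          · exact ⟨j, by dsimp only at hk ⊢; nlinarith⟩
          · ring_nf at hk; omega
          · ring_nf at hk; omega
        · rintro ⟨k, rfl⟩
          exact ⟨3 * k, by ring⟩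
    · rw [coeff_expand_of_not_dvd _ _ _ hm, coeff_phiNeg, coeff_phi, Set.indicator_of_notMem,
        if_neg (by rintro h; apply hm; omega)]
      · simp
      · rintro ⟨k, hk⟩
        obtain ⟨j, rfl | rfl | rfl⟩ := exists_eq_three_mul_add k <;> ring_nf at hk <;> omega
  · refine (hn ?_).elim
    push_cast
    rw [show (3 : ZMod 3) = 0 from rfl]
    ring
  · rw [coeff_expand_of_not_dvd _ _ _ (by omega), coeff_phiNeg, coeff_phi,
      Set.indicator_of_notMem, if_neg (by omega)]
    · simp
    · rintro ⟨k, hk⟩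
      obtain ⟨j, rfl | rfl | rfl⟩ := exists_eq_three_mul_add k <;> ring_nf at hk <;> omega

theorem supportedOn_psi_sub : SupportedOn 3 0 (psi - X ^ 2 * psi ^ 9) := by
  intro n hn
  rw [pow_nine, map_sub, sub_eq_zero]
  obtain ⟨m, rfl | rfl | rfl⟩ := exists_eq_three_mul_add n
  · refine (hn ?_).elim
    push_cast
    rw [show (3 : ZMod 3) = 0 from rfl, zero_mul]
  · have h1 : coeff (3 * m + 1)
        (X ^ 2 * expand 3 three_ne_zero (expand 3 three_ne_zero psi)) = 0 := by
      rw [coeff_X_pow_mul']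
      split_ifs
      · exact coeff_expand_of_not_dvd _ _ _ (by omega)
      · rfl
    rw [h1, psi, coeff_mk, Set.indicator_of_notMem]
    rintro ⟨k, hk⟩
    obtain ⟨j, rfl | rfl | rfl⟩ := exists_eq_three_mul_add k <;> ring_nf at hk <;> omega
  · rw [coeff_X_pow_mul, coeff_expand_mul]
    by_cases hm : 3 ∣ m
    · obtain ⟨l, rfl⟩ := hm
      rw [coeff_expand_mul, psi, coeff_mk, coeff_mk]
      refine indicator_eq_of_iff ⟨?_, ?_⟩
      · rintro ⟨k, hk⟩
        obtain ⟨j, rfl | rfl | rfl⟩ := exists_eq_three_mul_add k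
        · ring_nf at hk; omega
        · exact ⟨j, by dsimp only at hk ⊢; nlinarith⟩
        · ring_nf at hk; omega
      · rintro ⟨k, rfl⟩
        exact ⟨3 * k + 1, by ring⟩
    · rw [coeff_expand_of_not_dvd _ _ _ hm, psi, coeff_mk, Set.indicator_of_notMem]
      rintro ⟨k, hk⟩
      obtain ⟨j, rfl | rfl | rfl⟩ := exists_eq_three_mul_add k <;> ring_nf at hk <;> omega

theorem constantCoeff_phi : constantCoeff phi = 1 := by
  rw [← coeff_zero_eq_constantCoeff_apply, coeff_phi,
    Set.indicator_of_mem (Set.mem_range.2 ⟨0, by simp⟩)]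
  simp
  rfl

theorem constantCoeff_phiNeg : constantCoeff phiNeg = 1 := by
  rw [← coeff_zero_eq_constantCoeff_apply, coeff_phiNeg, coeff_zero_eq_constantCoeff_apply,
    constantCoeff_phi, pow_zero, one_mul]

theorem mul_inv_phiNeg : phiNeg * phiNeg⁻¹ = 1 :=
  PowerSeries.mul_inv_cancel _ (by simp [constantCoeff_phiNeg])

theorem coeff_nine_mul_add_eight (n : ℕ) : coeff (9 * n + 8) (psi * phiNeg⁻¹) = 0 := by
  obtain ⟨a, ha⟩ : ∃ a, a = phiNeg ^ 9 := ⟨_, rfl⟩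
  obtain ⟨b, hb⟩ : ∃ b, b = phiNeg - phiNeg ^ 9 := ⟨_, rfl⟩
  obtain ⟨c, hc⟩ : ∃ c, c = X ^ 2 * psi ^ 9 := ⟨_, rfl⟩
  obtain ⟨d, hd⟩ : ∃ d, d = psi - X ^ 2 * psi ^ 9 := ⟨_, rfl⟩
  have sa : SupportedOn 3 0 a := by rw [ha, pow_nine]; exact .expand _ _
  have sb : SupportedOn 3 1 b := hb ▸ supportedOn_phiNeg_sub
  have sc : SupportedOn 3 2 c := by
    rw [hc, pow_nine]
    exact (SupportedOn.X_pow 2).mul (.expand _ _)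
  have sd : SupportedOn 3 0 d := hd ▸ supportedOn_psi_sub
  have si : SupportedOn 3 0 (phiNeg⁻¹ ^ 3) := by rw [← expand_three]; exact .expand _ _
  have key : a ^ 2 * c + b ^ 2 * d = -(X ^ 2 * phiNeg ^ 6 * psi ^ 9) := by
    have hc' : c = psi * (phiNeg ^ 4 - 1) ^ 2 := by rw [phiNeg_pow_four, hc]; ring
    have hd' : d = psi - psi * (phiNeg ^ 4 - 1) ^ 2 := by rw [hd, ← hc, hc']
    have hX : X ^ 2 * phiNeg ^ 6 * psi ^ 9 = phiNeg ^ 6 * (psi * (phiNeg ^ 4 - 1) ^ 2) := by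
      rw [← hc', hc]; ring
    rw [hX, hd', hc', ha, hb]
    linear_combination
      psi * phiNeg ^ 2 * (phiNeg ^ 4 - 1) ^ 2 * (phiNeg ^ 4 + phiNeg ^ 8) * three_eq_zero
  have hK : psi * phiNeg⁻¹ = phiNeg⁻¹ ^ 3 * (d * (a * a) + (a * (b * c) + a * (b * c))) +
      phiNeg⁻¹ ^ 3 * (a * (b * d) + a * (b * d) + b * (b * c)) -
        X ^ 2 * expand 3 three_ne_zero ((a + b) * expand 3 three_ne_zero psi) := by
    have hM : a + b = phiNeg := by rw [ha, hb]; ring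
    have hS : c + d = psi := by rw [hc, hd]; ring
    have h1 : psi * phiNeg ^ 2 = (d * (a * a) + (a * (b * c) + a * (b * c))) +
        (a * (b * d) + a * (b * d) + b * (b * c)) + (a ^ 2 * c + b ^ 2 * d) := by
      rw [← hM, ← hS]; ring
    have h2 : psi * phiNeg⁻¹ = phiNeg⁻¹ ^ 3 * (psi * phiNeg ^ 2) := by
      calc psi * phiNeg⁻¹ = psi * phiNeg⁻¹ * (phiNeg * phiNeg⁻¹) ^ 2 := by
            rw [mul_inv_phiNeg]; ring
        _ = _ := by ring
    have h3 : phiNeg⁻¹ ^ 3 * (X ^ 2 * phiNeg ^ 6 * psi ^ 9) = X ^ 2 * (phiNeg * psi ^ 3) ^ 3 := by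
      calc _ = X ^ 2 * (phiNeg * psi ^ 3) ^ 3 * (phiNeg * phiNeg⁻¹) ^ 3 := by ring
        _ = _ := by rw [mul_inv_phiNeg]; ring
    rw [expand_three, expand_three, hM, h2, h1, key, ← h3]
    ring
  have hcast : ((9 * n + 8 : ℕ) : ZMod 3) = 2 := by
    push_cast
    rw [show (9 : ZMod 3) = 0 from rfl, zero_mul, zero_add]
    rfl
  have hcast_div : ((3 * n + 2 : ℕ) : ZMod 3) = 2 := by
    push_cast
    rw [show (3 : ZMod 3) = 0 from rfl, zero_mul, zero_add]
  have z0 := (si.mul ((sd.mul (sa.mul sa)).add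
    ((sa.mul (sb.mul sc)).add (sa.mul (sb.mul sc))))) (9 * n + 8) (by rw [hcast]; decide)
  have z1 := (si.mul (((sa.mul (sb.mul sd)).add (sa.mul (sb.mul sd))).add
    (sb.mul (sb.mul sc)))) (9 * n + 8) (by rw [hcast]; decide)
  rw [hK, map_sub, map_add, z0, z1, show 9 * n + 8 = 3 * (3 * n + 2) + 2 by ring, coeff_X_pow_mul,
    coeff_expand_mul, add_mul, map_add,
    (sa.mul (.expand _ psi)) (3 * n + 2) (by rw [hcast_div]; decide),
    (sb.mul (.expand _ psi)) (3 * n + 2) (by rw [hcast_div]; decide)]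
  simp

/-- The series `(1 - X ^ n) / (1 + X ^ n)`. -/
noncomputable def factor (n : ℕ) : (ZMod 3)⟦X⟧ := (1 - X ^ n) * (1 + X ^ n)⁻¹

theorem one_add_X_pow_mul_inv (n : ℕ) :
    (1 + X ^ n : (ZMod 3)⟦X⟧) * (1 + X ^ n)⁻¹ = 1 := by
  refine PowerSeries.mul_inv_cancel _ ?_
  rcases eq_or_ne n 0 with rfl | hn
  · simp only [pow_zero, map_add, map_one]
    decide
  · simp [hn]

theorem factor_zero : factor 0 = 0 := by simp [factor]

theorem eq_factor_of_mul_eq {n : ℕ} {f : (ZMod 3)⟦X⟧} (h : f * (1 + X ^ n) = 1 - X ^ n) :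
    f = factor n := by
  rw [factor, ← h, mul_assoc, one_add_X_pow_mul_inv, mul_one]

theorem factor_mul (n : ℕ) : factor n * (1 + X ^ n) = 1 - X ^ n := by
  rw [factor, mul_assoc, mul_comm _ (1 + X ^ n), one_add_X_pow_mul_inv, mul_one]

theorem expand_factor (k : ℕ) (hk : k ≠ 0) (n : ℕ) :
    expand k hk (factor n) = factor (k * n) := by
  refine eq_factor_of_mul_eq ?_
  simpa only [map_mul, map_add, map_sub, map_one, map_pow, expand_X, ← pow_mul] using
    congrArg (expand k hk) (factor_mul n)

/-- The summands in a finite form of Gauss's identity for `phiNeg`. -/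
noncomputable def gaussTerm (n s : ℕ) : (ZMod 3)⟦X⟧ :=
  (-1) ^ s * (∏ i ∈ Finset.Ico s n, factor (i + 1)) *
    (2 * (1 + X ^ s)⁻¹ * X ^ (s * (n + 1)))

theorem gaussTerm_sub (n s : ℕ) (hs : s ≤ n) :
    gaussTerm (n + 1) s - gaussTerm n s +
      (-1) ^ s * (∏ i ∈ Finset.Ico s n, factor (i + 1)) *
        (2 * (1 + X ^ (n + 1))⁻¹ * X ^ (s * (n + 1))) * factor s =
      (-1) ^ (s + 1) * (∏ i ∈ Finset.Ico s n, factor (i + 1)) *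
        (2 * (1 + X ^ (n + 1))⁻¹ * X ^ ((s + 1) * (n + 1))) := by
  have hN := one_add_X_pow_mul_inv (n + 1)
  have h := one_add_X_pow_mul_inv s
  rw [gaussTerm, gaussTerm, Finset.prod_Ico_succ_top hs,
    show s * (n + 1 + 1) = s * (n + 1) + s by ring,
    show (s + 1) * (n + 1) = s * (n + 1) + (n + 1) by ring,
    pow_add X (s * (n + 1)) s, pow_add X (s * (n + 1)) (n + 1), factor, factor]
  generalize ∏ i ∈ Finset.Ico s n, factor (i + 1) = P
  generalize (X : (ZMod 3)⟦X⟧) ^ (s * (n + 1)) = z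
  generalize (1 + (X : (ZMod 3)⟦X⟧) ^ (n + 1))⁻¹ = u at hN ⊢
  generalize (1 + (X : (ZMod 3)⟦X⟧) ^ s)⁻¹ = v at h ⊢
  generalize (X : (ZMod 3)⟦X⟧) ^ (n + 1) = y at *
  linear_combination (-1) ^ s * P * 2 * z * (v * hN - y * u * h)

theorem sum_gaussTerm_sub (n m : ℕ) (hm : m ≤ n) :
    ∑ s ∈ Finset.range m, (gaussTerm (n + 1) s - gaussTerm n s) =
      (-1) ^ m * (∏ i ∈ Finset.Ico m n, factor (i + 1)) *
        (2 * (1 + X ^ (n + 1))⁻¹ * X ^ (m * (n + 1))) * factor m := by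
  induction m with
  | zero => simp [factor_zero]
  | succ m ih =>
    have h := gaussTerm_sub n m (by omega)
    rw [Finset.prod_eq_prod_Ico_succ_bot (by omega : m < n)] at ih h
    rw [Finset.sum_range_succ, ih (by omega)]
    linear_combination h

theorem sum_gaussTerm (n : ℕ) : ∑ s ∈ Finset.range (n + 1), gaussTerm n s =
    2 * ∑ k ∈ Finset.range (n + 1), (-1) ^ k * X ^ k ^ 2 - 1 := by
  induction n with
  | zero =>
    have h := one_add_X_pow_mul_inv 0
    simp only [pow_zero] at h
    simp only [gaussTerm, zero_add, Finset.range_one, Finset.sum_singleton, Finset.Ico_self,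
      Finset.prod_empty, pow_zero, zero_mul]
    linear_combination h
  | succ n ih =>
    have h1 := sum_gaussTerm_sub n n le_rfl
    have h2 := gaussTerm_sub n n le_rfl
    have h3 := one_add_X_pow_mul_inv (n + 1)
    rw [Finset.sum_sub_distrib] at h1
    have h4 : gaussTerm (n + 1) (n + 1) =
        (-1) ^ (n + 1) * (2 * (1 + X ^ (n + 1))⁻¹ * X ^ ((n + 1) ^ 2)) * X ^ (n + 1) := by
      rw [gaussTerm, Finset.Ico_self, Finset.prod_empty]
      ring
    rw [Finset.Ico_self, Finset.prod_empty, ← pow_two] at h2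
    rw [Finset.Ico_self, Finset.prod_empty] at h1
    rw [Finset.sum_range_succ _ (n + 1), Finset.sum_range_succ _ (n + 1), h4]
    rw [Finset.sum_range_succ] at ih ⊢
    linear_combination h1 + h2 + ih + 2 * (-1) ^ (n + 1) * X ^ (n + 1) ^ 2 * h3

theorem coeff_prod_factor {n d : ℕ} (h : d ≤ n) :
    coeff d (∏ i ∈ Finset.range n, factor (i + 1)) =
      coeff d (2 * ∑ k ∈ Finset.range (n + 1), (-1) ^ k * X ^ k ^ 2 - 1 : (ZMod 3)⟦X⟧) := by
  have h0 : gaussTerm n 0 = ∏ i ∈ Finset.range n, factor (i + 1) := by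
    have h := one_add_X_pow_mul_inv 0
    rw [gaussTerm, ← Finset.range_eq_Ico, zero_mul]
    simp only [pow_zero] at h ⊢
    linear_combination (∏ i ∈ Finset.range n, factor (i + 1)) * h
  rw [← sum_gaussTerm, Finset.sum_range_succ', h0, map_add, map_sum, Finset.sum_eq_zero, zero_add]
  intro s _
  rw [gaussTerm, ← mul_assoc, ← mul_assoc, coeff_mul_X_pow', if_neg (by nlinarith)]

theorem hasSum_phiNeg_nat : HasSum (fun k : ℕ ↦ (-1 : (ZMod 3)⟦X⟧) ^ k * X ^ k ^ 2)
    (evalNegHom (PowerSeries.mk (Set.indicator (Set.range fun k : ℕ ↦ k ^ 2) 1))) := by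
  convert! hasSum_sq.map evalNegHom continuous_evalNegHom using 1
  ext1 k
  rw [Function.comp_apply, map_pow, evalNegHom_X, neg_pow X]
  congr 1
  rcases Nat.even_or_odd k with h | h
  · rw [h.neg_one_pow, (h.pow_of_ne_zero two_ne_zero).neg_one_pow]
  · rw [h.neg_one_pow, h.pow.neg_one_pow]

theorem multipliable_factor : Multipliable fun i : ℕ ↦ factor (i + 1) := by
  have h (i : ℕ) : factor (i + 1) = 1 + X ^ (i + 1) * (-2 * (1 + X ^ (i + 1))⁻¹) := by
    have := one_add_X_pow_mul_inv (i + 1)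
    rw [factor]
    linear_combination this
  simp_rw [h]
  refine multipliable_one_add_of_tendsto_order_atTop_nhds_top _ ?_
  refine ENat.tendsto_nhds_top_iff_natCast_lt.mpr fun n ↦ eventually_atTop.mpr ⟨n, fun m hm ↦ ?_⟩
  grw [← le_order_mul, order_X_pow]
  refine lt_of_lt_of_le ?_ le_self_add
  exact_mod_cast Nat.lt_succ_of_le hm

/-- Gauss's product formula for the theta series `phiNeg`. -/
theorem hasProd_factor : HasProd (fun i : ℕ ↦ factor (i + 1)) phiNeg := by
  have h1 := multipliable_factor.hasProd
  have h2 := ((hasSum_phiNeg_nat.tendsto_sum_nat.comp (tendsto_add_atTop_nat 1)).const_mul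
    2).sub_const 1
  suffices h : ∏' i : ℕ, factor (i + 1) = phiNeg from h ▸ h1
  refine tendsto_nhds_unique h1.tendsto_prod_nat ?_
  rw [phiNeg, phi, map_sub, map_mul, map_one, map_ofNat]
  rw [tendsto_iff_coeff_tendsto] at h2 ⊢
  intro d
  refine (h2 d).congr' (eventually_atTop.2 ⟨d, fun n hn ↦ ?_⟩)
  exact (coeff_prod_factor hn).symm

theorem hasProd_expand_phiNeg (k : ℕ) (hk : k ≠ 0) :
    HasProd (fun i : ℕ ↦ if k ∣ i + 1 then factor (i + 1) else 1) (expand k hk phiNeg) := by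
  have h := hasProd_factor.map (expand k hk) (continuous_expand k hk)
  have hpos := Nat.pos_of_ne_zero hk
  have hg (i : ℕ) : k * (i + 1) - 1 + 1 = k * (i + 1) :=
    Nat.sub_add_cancel (Nat.mul_pos hpos i.succ_pos)
  have hinj : Function.Injective fun i : ℕ ↦ k * (i + 1) - 1 := by
    intro i j hij
    have : k * (i + 1) = k * (j + 1) := by rw [← hg i, ← hg j]; exact congrArg (· + 1) hij
    simpa using Nat.eq_of_mul_eq_mul_left hpos this
  rw [← hinj.hasProd_iff]
  · convert! h using 1
    ext1 i
    simp only [Function.comp_apply, hg, dvd_mul_right, if_true, expand_factor]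
  · intro i hi
    refine if_neg ?_
    rintro ⟨j, hj⟩
    refine hi ⟨j - 1, ?_⟩
    have : j ≠ 0 := by rintro rfl; simp at hj
    dsimp only
    rw [Nat.sub_add_cancel (by omega), ← hj]
    rfl

theorem evalNegHom_phiNeg : evalNegHom phiNeg = phi := by
  ext n
  rw [evalNegHom, coeff_rescale, coeff_phiNeg, ← mul_assoc, ← mul_pow]
  simp

theorem phiNeg_mul_phi : phiNeg * phi = expand 2 two_ne_zero phiNeg ^ 2 := by
  have h1 := hasProd_factor.map evalNegHom continuous_evalNegHom
  rw [evalNegHom_phiNeg] at h1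
  have h2 := hasProd_expand_phiNeg 2 two_ne_zero
  rw [pow_two]
  refine (hasProd_factor.mul h1).unique ?_
  convert! h2.mul h2 using 1
  ext1 i
  have h := factor_mul (i + 1)
  have hneg := congrArg evalNegHom h
  simp only [map_mul, map_add, map_sub, map_one, map_pow, evalNegHom_X] at hneg
  split_ifs with hi
  · rw [(even_iff_two_dvd.2 hi).neg_pow] at hneg
    rw [Function.comp_apply, eq_factor_of_mul_eq hneg]
  · rw [(Nat.not_even_iff_odd.1 (mt even_iff_two_dvd.1 hi)).neg_pow] at hneg
    have hne : (1 - X ^ (i + 1) : (ZMod 3)⟦X⟧) ≠ 0 := by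
      intro h0
      simpa using congrArg constantCoeff h0
    refine mul_right_cancel₀ hne ?_
    rw [Function.comp_apply]
    linear_combination factor (i + 1) * hneg + h

/-- The generating function of `biregOverpartitions 8 3`, with coefficients modulo three. -/
noncomputable def biregSeries : (ZMod 3)⟦X⟧ :=
  Nat.Partition.genFun fun i _ ↦ if ¬ 8 ∣ i ∧ ¬ 3 ∣ i then 2 else 0

theorem coeff_biregSeries (n : ℕ) : coeff n biregSeries = (biregOverpartitions 8 3 n : ZMod 3) := by
  rw [biregSeries, Nat.Partition.coeff_genFun, biregOverpartitions, Nat.cast_sum]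
  refine Finset.sum_congr rfl fun p _ ↦ ?_
  rw [Finsupp.prod, Multiset.toFinsupp_support]
  split_ifs with h
  · rw [Finset.prod_congr rfl fun i hi ↦ if_pos (h i (Multiset.mem_toFinset.1 hi))]
    simp
  · push Not at h
    obtain ⟨x, hx, h⟩ := h
    rw [Finset.prod_eq_zero (Multiset.mem_toFinset.2 hx), Nat.cast_zero]
    exact if_neg fun h' ↦ h'.2 (h h'.1)

theorem one_add_tsum_mul_factor (i : ℕ) :
    (1 + ∑' j : ℕ, (2 : ZMod 3) • (X : (ZMod 3)⟦X⟧) ^ ((i + 1) * (j + 1))) * factor (i + 1) = 1 := by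
  have hc : constantCoeff ((X : (ZMod 3)⟦X⟧) ^ (i + 1)) = 0 := by simp
  have h1 := tsum_pow_mul_one_sub_of_constantCoeff_eq_zero hc
  have hs := summable_pow_of_constantCoeff_eq_zero hc
  have h2 : ∑' j : ℕ, (2 : ZMod 3) • (X : (ZMod 3)⟦X⟧) ^ ((i + 1) * (j + 1)) =
      2 * X ^ (i + 1) * ∑' j : ℕ, ((X : (ZMod 3)⟦X⟧) ^ (i + 1)) ^ j := by
    rw [← hs.tsum_mul_left]
    refine tsum_congr fun j ↦ ?_
    rw [smul_eq_C_mul, show (C (2 : ZMod 3) : (ZMod 3)⟦X⟧) = 2 from rfl]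
    ring
  have h3 := one_add_X_pow_mul_inv (i + 1)
  rw [h2, factor]
  linear_combination 2 * X ^ (i + 1) * (1 + X ^ (i + 1))⁻¹ * h1 + h3

theorem biregSeries_mul : biregSeries * phiNeg * expand 24 (by decide) phiNeg =
    expand 8 (by decide) phiNeg * expand 3 three_ne_zero phiNeg := by
  have h := Nat.Partition.hasProd_genFun
    fun i _ ↦ if ¬ 8 ∣ i ∧ ¬ 3 ∣ i then (2 : ZMod 3) else 0
  refine ((h.mul hasProd_factor).mul (hasProd_expand_phiNeg 24 (by decide))).unique ?_
  convert! (hasProd_expand_phiNeg 8 (by decide)).mul (hasProd_expand_phiNeg 3 three_ne_zero) using 1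
  ext1 i
  by_cases h8 : 8 ∣ i + 1 <;> by_cases h3 : 3 ∣ i + 1
  · have h24 : 24 ∣ i + 1 := by omega
    simp [h8, h3, h24]
  · simp [h8, h3, show ¬ 24 ∣ i + 1 by omega]
  · simp [h8, h3, show ¬ 24 ∣ i + 1 by omega]
  · have h24 : ¬ 24 ∣ i + 1 := by omega
    simpa [h8, h3, h24] using one_add_tsum_mul_factor i

theorem phiNeg_ne_zero : phiNeg ≠ 0 := by
  intro h
  simpa [h] using constantCoeff_phiNeg

theorem biregSeries_mul_sq :
    biregSeries * expand 8 (by decide) phiNeg ^ 2 = phiNeg ^ 2 := by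
  have h := biregSeries_mul
  have h24 : expand 24 (by decide) phiNeg = expand 8 (by decide) phiNeg ^ 3 := by
    rw [← expand_three, ← expand_mul]
  have h8 : expand 8 (by decide) phiNeg ≠ 0 := by
    intro h0
    simpa [constantCoeff_phiNeg] using congrArg constantCoeff h0
  rw [h24, expand_three] at h
  refine mul_left_cancel₀ (mul_ne_zero phiNeg_ne_zero h8) ?_
  linear_combination h

theorem coeff_biregSeries_four_mul_add_one (n : ℕ) :
    coeff (4 * n + 1) biregSeries = 2 * coeff n (psi * phiNeg⁻¹) := by
  have hphi : phi * phi⁻¹ = 1 := PowerSeries.mul_inv_cancel _ (by simp [constantCoeff_phi])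
  have h1 := biregSeries_mul_sq
  have h8 : expand 8 (by decide) phiNeg ^ 2 = expand 4 four_ne_zero (phiNeg * phi) := by
    rw [phiNeg_mul_phi, map_pow, ← expand_mul]
  have e1 := congrArg (expand 4 four_ne_zero) hphi
  have e2 := congrArg (expand 4 four_ne_zero) mul_inv_phiNeg
  have hG : biregSeries = expand 4 four_ne_zero (phi * phiNeg⁻¹) +
      X ^ 1 * expand 4 four_ne_zero (2 * (psi * phiNeg⁻¹)) +
      X ^ 2 * expand 4 four_ne_zero (psi ^ 2 * phiNeg⁻¹ * phi⁻¹) := by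
    have hsq : phiNeg ^ 2 = (expand 4 four_ne_zero phi + X * expand 4 four_ne_zero psi) ^ 2 := by
      rw [← phiNeg_eq_expand_four]
    rw [h8, hsq] at h1
    simp only [map_mul, map_pow, map_one, map_ofNat] at h1 e1 e2 ⊢
    generalize expand 4 four_ne_zero phi = p at *
    generalize expand 4 four_ne_zero phiNeg = m at *
    generalize expand 4 four_ne_zero psi = s at *
    generalize expand 4 four_ne_zero phiNeg⁻¹ = i at *
    generalize expand 4 four_ne_zero phi⁻¹ = j at *
    linear_combination i * j * h1 - biregSeries * (p * j) * e2 +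
      (p * i + 2 * X * s * i - biregSeries) * e1
  rw [hG, map_add, map_add, coeff_expand_of_not_dvd _ _ _ (by omega), coeff_X_pow_mul,
    coeff_expand_mul, coeff_X_pow_mul', show (2 : (ZMod 3)⟦X⟧) = C 2 from rfl, coeff_C_mul]
  split_ifs with h
  · rw [coeff_expand_of_not_dvd _ _ _ (by omega), zero_add, add_zero]
  · rw [zero_add, add_zero]

end BiregularOverpartition

theorem B83_mod3_36n33 (n : ℕ) : 3 ∣ biregOverpartitions 8 3 (36 * n + 33) := by
  rw [← ZMod.natCast_eq_zero_iff, ← BiregularOverpartition.coeff_biregSeries,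
    show 36 * n + 33 = 4 * (9 * n + 8) + 1 by ring,
    BiregularOverpartition.coeff_biregSeries_four_mul_add_one,
    BiregularOverpartition.coeff_nine_mul_add_eight, mul_zero]
end

section
/- Let t ≥ 2 be an integer. Then for all integers n ≥ 0: B̄_{3,2^t}(16n+6) ≡ 0 (mod 8), B̄_{3,2^t}(16n+10) ≡ 0 (mod 8), and B̄_{3,2^t}(16n+14) ≡ 0 (mod 8). -/
open Finset

/-- The product `∏_{k ≤ n} (1 + q ^ k)`. -/
def prodOneAdd {R : Type*} [CommRing R] (q : R) (n : ℕ) : R :=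
  ∏ k ∈ range n, (1 + q ^ (k + 1))

/-- The partial theta sum `∑_{1 ≤ i ≤ n} (-1) ^ i q ^ (i ^ 2)`. -/
def thetaTail {R : Type*} [CommRing R] (q : R) (n : ℕ) : R :=
  ∑ i ∈ range n, (-1) ^ (i + 1) * q ^ ((i + 1) ^ 2)

/-- The `s`-th error term in the finite form of Gauss's theta identity. -/
def gaussTerm {R : Type*} [CommRing R] (q : R) (n s : ℕ) : R :=
  (-1) ^ (s + 1) * q ^ ((s + 1) * (n + 1)) * prodOneAdd q s *
    ∏ k ∈ Ico (s + 1) n, (1 - q ^ (k + 1))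

section Gauss

variable {R : Type*} [CommRing R] (q : R)

lemma gaussTerm_succ_sub {n s : ℕ} (hs : s < n) :
    gaussTerm q (n + 1) s - (1 + q ^ (n + 1)) * gaussTerm q n s =
      (-1) ^ s * q ^ ((s + 1) * (n + 1)) * prodOneAdd q s * ∏ k ∈ Ico s n, (1 - q ^ (k + 1)) -
      (-1) ^ (s + 1) * q ^ ((s + 2) * (n + 1)) * prodOneAdd q (s + 1) *
        ∏ k ∈ Ico (s + 1) n, (1 - q ^ (k + 1)) := by
  rw [gaussTerm, gaussTerm, prod_Ico_succ_top (by omega : s + 1 ≤ n),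
    prod_eq_prod_Ico_succ_bot hs, prodOneAdd, prodOneAdd, prod_range_succ]
  ring

lemma sum_gaussTerm_succ (n : ℕ) :
    ∑ s ∈ range (n + 1), gaussTerm q (n + 1) s =
      (1 + q ^ (n + 1)) * ∑ s ∈ range n, gaussTerm q n s +
      q ^ (n + 1) * ∏ k ∈ range n, (1 - q ^ (k + 1)) +
      (-1) ^ (n + 1) * q ^ ((n + 1) ^ 2) * prodOneAdd q (n + 1) := by
  have tele := sum_range_sub' (fun s ↦ (-1) ^ s * q ^ ((s + 1) * (n + 1)) * prodOneAdd q s *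
    ∏ k ∈ Ico s n, (1 - q ^ (k + 1))) n
  have h := sum_congr (rfl : range n = range n)
    fun s hs ↦ gaussTerm_succ_sub q (mem_range.mp hs)
  rw [tele, sum_sub_distrib, ← mul_sum] at h
  rw [sum_range_succ, gaussTerm]
  simp only [Ico_self, prod_empty, prodOneAdd, range_zero,
    ← range_eq_Ico, prod_range_succ] at h ⊢
  linear_combination h

/-- A finite form of Gauss's identity `∑ (-1) ^ i q ^ (i ^ 2) = ∏ (1 - q ^ k) / (1 + q ^ k)`. -/
theorem prodOneAdd_mul_theta (n : ℕ) :
    prodOneAdd q n * (1 + 2 * thetaTail q n) =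
      ∏ k ∈ range n, (1 - q ^ (k + 1)) + 2 * ∑ s ∈ range n, gaussTerm q n s := by
  induction n with
  | zero => simp [prodOneAdd, thetaTail]
  | succ n ih =>
    rw [sum_gaussTerm_succ, thetaTail, sum_range_succ, ← thetaTail, prod_range_succ]
    have hB : prodOneAdd q (n + 1) = prodOneAdd q n * (1 + q ^ (n + 1)) := prod_range_succ _ _
    rw [hB]
    linear_combination (1 + q ^ (n + 1)) * ih

theorem prodOneAdd_mul_theta_of_pow_eq_zero {n : ℕ} (hq : q ^ (n + 1) = 0) :
    prodOneAdd q n * (1 + 2 * thetaTail q n) = ∏ k ∈ range n, (1 - q ^ (k + 1)) := by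
  rw [prodOneAdd_mul_theta, sum_eq_zero, mul_zero, add_zero]
  intro s _
  rw [gaussTerm, mul_comm (s + 1), pow_mul, hq]
  simp

lemma isUnit_prodOneAdd (hq : IsNilpotent q) (n : ℕ) : IsUnit (prodOneAdd q n) := by
  rw [prodOneAdd, IsUnit.prod_iff]
  exact fun k _ ↦ (hq.pow_succ k).isUnit_one_add

end Gauss

/-- A product over the multiples of `j` up to `N`, reindexed. -/
lemma prod_ite_dvd {M : Type*} [CommMonoid M] (g : ℕ → M) {j : ℕ} (hj : 0 < j) (N : ℕ) :
    ∏ k ∈ range N, (if j ∣ k + 1 then g (k + 1) else 1) =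
      ∏ i ∈ range (N / j), g (j * (i + 1)) := by
  rw [← prod_filter]
  symm
  refine prod_bij (fun i _ ↦ j * (i + 1) - 1) ?_ ?_ ?_ ?_
  · intro i hi
    have h1 : j * (i + 1) ≤ N := by
      rw [mul_comm, ← Nat.le_div_iff_mul_le hj]
      exact mem_range.mp hi
    have h2 : 0 < j * (i + 1) := by positivity
    rw [mem_filter, mem_range, Nat.sub_add_cancel h2]
    exact ⟨by omega, dvd_mul_right _ _⟩
  · intro a _ b _ h
    have h1 : 0 < j * (a + 1) := by positivity
    have h2 : 0 < j * (b + 1) := by positivity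
    have h3 : j * (a + 1) = j * (b + 1) := by omega
    simpa using Nat.eq_of_mul_eq_mul_left hj h3
  · intro k hk
    obtain ⟨hk, c, hc⟩ := mem_filter.mp hk
    rcases c with _ | c
    · simp at hc
    refine ⟨c, ?_, by rw [← hc]; rfl⟩
    rw [mem_range, ← Nat.succ_le_iff, Nat.le_div_iff_mul_le hj, mul_comm]
    rw [mem_range] at hk
    exact hc ▸ hk
  · intro i _
    rw [Nat.sub_add_cancel (by positivity : 0 < j * (i + 1))]

/-- Inclusion-exclusion for products over the integers divisible by neither `a` nor `b`. -/
lemma prod_mul_prod_dvd {M : Type*} [CommMonoid M] (g : ℕ → M) {a b : ℕ} (hab : a.Coprime b)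
    (N : ℕ) :
    (∏ k ∈ range N, (if ¬ a ∣ k + 1 ∧ ¬ b ∣ k + 1 then g (k + 1) else 1)) *
        (∏ k ∈ range N, (if a ∣ k + 1 then g (k + 1) else 1)) *
        (∏ k ∈ range N, (if b ∣ k + 1 then g (k + 1) else 1)) =
      (∏ k ∈ range N, (if 1 ∣ k + 1 then g (k + 1) else 1)) *
        ∏ k ∈ range N, (if a * b ∣ k + 1 then g (k + 1) else 1) := by
  simp only [← prod_mul_distrib]
  refine prod_congr rfl fun k _ ↦ ?_
  have hdvd : a * b ∣ k + 1 ↔ a ∣ k + 1 ∧ b ∣ k + 1 :=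
    ⟨fun h ↦ ⟨dvd_of_mul_right_dvd h, dvd_of_mul_left_dvd h⟩,
      fun h ↦ Nat.Coprime.mul_dvd_of_dvd_of_dvd hab h.1 h.2⟩
  by_cases h1 : a ∣ k + 1 <;> by_cases h2 : b ∣ k + 1 <;> simp [hdvd, h1, h2]

/-- The theta quotient for biregular overpartitions, truncated at `x ^ (N + 1) = 0`, modulo `8`. -/
theorem eq_theta_expansion {Q : Type*} [CommRing Q] (h8 : (8 : Q) = 0) {x : Q} {N : ℕ}
    (hx : x ^ (N + 1) = 0) {a b : ℕ} (ha : 0 < a) (hb : 0 < b) (hab : a.Coprime b) {F : Q}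
    (hF : F * (∏ k ∈ range N, (if ¬ a ∣ k + 1 ∧ ¬ b ∣ k + 1 then 1 - x ^ (k + 1) else 1)) =
      ∏ k ∈ range N, (if ¬ a ∣ k + 1 ∧ ¬ b ∣ k + 1 then 1 + x ^ (k + 1) else 1))
    {θ : ℕ → Q} (hθ : ∀ j, θ j = thetaTail (x ^ j) (N / j)) :
    F = 1 + 2 * (θ a + θ b - θ 1 - θ (a * b)) +
      4 * (θ 1 * θ 1 + θ (a * b) * θ (a * b) + θ a * θ b + θ a * θ 1 + θ a * θ (a * b) +
        θ b * θ 1 + θ b * θ (a * b) + θ 1 * θ (a * b)) := by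
  have key : ∀ j, 0 < j →
      (∏ k ∈ range N, (if j ∣ k + 1 then 1 + x ^ (k + 1) else 1)) * (1 + 2 * θ j) =
        ∏ k ∈ range N, (if j ∣ k + 1 then 1 - x ^ (k + 1) else 1) := by
    intro j hj
    have hq : (x ^ j) ^ (N / j + 1) = 0 := by
      rw [← pow_mul]
      exact pow_eq_zero_of_le (Nat.lt_mul_div_succ N hj) hx
    rw [prod_ite_dvd (fun k ↦ 1 + x ^ k) hj, prod_ite_dvd (fun k ↦ 1 - x ^ k) hj, hθ]
    simpa only [prodOneAdd, pow_mul] using prodOneAdd_mul_theta_of_pow_eq_zero _ hq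
  have unit : ∀ j, 0 < j →
      IsUnit (∏ k ∈ range N, (if j ∣ k + 1 then 1 + x ^ (k + 1) else 1)) := by
    intro j hj
    have hn : IsNilpotent x := ⟨_, hx⟩
    rw [prod_ite_dvd (fun k ↦ 1 + x ^ k) hj]
    simpa only [prodOneAdd, pow_mul] using
      isUnit_prodOneAdd _ (hn.pow_of_pos hj.ne') (N / j)
  have hA := prod_mul_prod_dvd (fun k ↦ 1 - x ^ k) hab N
  have hB := prod_mul_prod_dvd (fun k ↦ 1 + x ^ k) hab N
  have k1 := key 1 one_pos
  have ka := key a ha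
  have kb := key b hb
  have kab := key (a * b) (Nat.mul_pos ha hb)
  have u := (unit 1 one_pos).mul (unit (a * b) (Nat.mul_pos ha hb))
  rw [← k1, ← ka, ← kb, ← kab] at hA
  have quot : F * ((1 + 2 * θ 1) * (1 + 2 * θ (a * b))) = (1 + 2 * θ a) * (1 + 2 * θ b) := by
    refine u.mul_left_cancel ?_
    linear_combination (-F) * hA + (1 + 2 * θ a) * (1 + 2 * θ b) * hB +
      (∏ k ∈ range N, (if a ∣ k + 1 then 1 + x ^ (k + 1) else 1)) * (1 + 2 * θ a) *
      (∏ k ∈ range N, (if b ∣ k + 1 then 1 + x ^ (k + 1) else 1)) * (1 + 2 * θ b) * hF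
  have inv : ∀ y : Q, (1 + 2 * y) * (1 - 2 * y + 4 * (y * y)) = 1 := fun y ↦ by
    linear_combination y ^ 3 * h8
  have hF' : F = (1 + 2 * θ a) * (1 + 2 * θ b) * (1 - 2 * θ 1 + 4 * (θ 1 * θ 1)) *
      (1 - 2 * θ (a * b) + 4 * (θ (a * b) * θ (a * b))) := by
    rw [← quot]
    linear_combination (-F) * inv (θ 1) - F * (1 + 2 * θ 1) *
      (1 - 2 * θ 1 + 4 * (θ 1 * θ 1)) * inv (θ (a * b))
  rw [hF']
  generalize θ a = A, θ b = B, θ 1 = C, θ (a * b) = D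
  linear_combination ((-C * D ^ 2 - C ^ 2 * D + 2 * C ^ 2 * D ^ 2) *
    (1 + 2 * (A + B) + 4 * A * B) + (A + B + 2 * A * B) * (C ^ 2 + D ^ 2 + C * D) -
    A * B * (C + D) - (A + B) * (C + D)) * h8

open PowerSeries PowerSeries.WithPiTopology in
/-- The generating function of overpartitions with parts in `{1, …, N}` satisfying `P`. -/
theorem genFun_two_mul_prod {R : Type*} [CommRing R] (P : ℕ → Prop) [DecidablePred P] (N : ℕ) :
    Nat.Partition.genFun (fun i _ ↦ if i ≤ N ∧ P i then (2 : R) else 0) *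
        ∏ k ∈ range N, (if P (k + 1) then 1 - (X : R⟦X⟧) ^ (k + 1) else 1) =
      ∏ k ∈ range N, (if P (k + 1) then 1 + (X : R⟦X⟧) ^ (k + 1) else 1) := by
  let _ : TopologicalSpace R := ⊥
  have _ : DiscreteTopology R := ⟨rfl⟩
  rw [Nat.Partition.genFun_eq_tprod, tprod_eq_prod (s := range N), ← prod_mul_distrib]
  · refine prod_congr rfl fun k hk ↦ ?_
    have hk' : k + 1 ≤ N := mem_range.mp hk
    by_cases hP : P (k + 1)
    · simp only [hk', hP, and_self, if_true]
      have hs : Summable fun j ↦ (2 : R) • (X : R⟦X⟧) ^ ((k + 1) * (j + 1)) :=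
        Nat.Partition.summable_genFun_term (fun _ _ ↦ (2 : R)) k
      have h := hs.tsum_eq_zero_add
      have h' : ∑' j, (2 : R) • (X : R⟦X⟧) ^ ((k + 1) * (j + 1 + 1)) =
          (∑' j, (2 : R) • (X : R⟦X⟧) ^ ((k + 1) * (j + 1))) * X ^ (k + 1) := by
        rw [← hs.tsum_mul_right]
        refine tsum_congr fun j ↦ ?_
        rw [smul_mul_assoc, ← pow_add]
        rfl
      rw [h'] at h
      have h2 : (2 : R) • (X : R⟦X⟧) ^ ((k + 1) * (0 + 1)) = 2 * X ^ (k + 1) := by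
        rw [ofNat_smul_eq_nsmul, nsmul_eq_mul]
        simp
      rw [h2] at h
      linear_combination h
    · simp [hP]
  · intro k hk
    have hk' : ¬ k + 1 ≤ N := by simpa using hk
    simp [hk']

lemma coeff_genFun_two {R : Type*} [CommRing R] (a b : ℕ) {n N : ℕ} (hn : n ≤ N) :
    (Nat.Partition.genFun
      (fun i _ ↦ if i ≤ N ∧ (¬ a ∣ i ∧ ¬ b ∣ i) then (2 : R) else 0)).coeff n =
      (biregOverpartitions a b n : R) := by
  rw [Nat.Partition.coeff_genFun, biregOverpartitions, Nat.cast_sum]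
  refine sum_congr rfl fun p _ ↦ ?_
  have hle : ∀ x ∈ p.parts, x ≤ N := fun x hx ↦
    (p.parts_sum ▸ Multiset.single_le_sum (fun _ _ ↦ Nat.zero_le _) x hx).trans hn
  rw [Finsupp.prod, Multiset.toFinsupp_support]
  by_cases h : ∀ x ∈ p.parts, ¬ a ∣ x ∧ ¬ b ∣ x
  · rw [if_pos h, prod_congr rfl (g := fun _ ↦ (2 : R)), prod_const]
    · simp
    · intro x hx
      rw [Multiset.mem_toFinset] at hx
      rw [if_pos ⟨hle x hx, h x hx⟩]
  · rw [if_neg h]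
    push Not at h
    obtain ⟨x, hx, hx'⟩ := h
    rw [Nat.cast_zero]
    refine prod_eq_zero (Multiset.mem_toFinset.mpr hx) (if_neg ?_)
    tauto

section Coeff

open PowerSeries

variable {R : Type*} [CommRing R]

lemma neg_one_pow_mul_X_pow (i m : ℕ) :
    (-1) ^ i * (X : R⟦X⟧) ^ m = monomial m ((-1) ^ i) := by
  rw [X_pow_eq, ← map_one (PowerSeries.C (R := R)), ← map_neg, ← map_pow, ← smul_eq_C_mul,
    ← map_smul, smul_eq_mul, mul_one]

lemma coeff_thetaTail_eq_zero {j m K : ℕ} (h : ∀ i, j * i ^ 2 ≠ m) :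
    (thetaTail ((X : R⟦X⟧) ^ j) K).coeff m = 0 := by
  rw [thetaTail, map_sum]
  refine sum_eq_zero fun i _ ↦ ?_
  rw [← pow_mul, neg_one_pow_mul_X_pow, coeff_monomial, if_neg (h _).symm]

lemma coeff_thetaTail_mul_eq_zero {j l m K L : ℕ} (h : ∀ i k, j * i ^ 2 + l * k ^ 2 ≠ m) :
    (thetaTail ((X : R⟦X⟧) ^ j) K * thetaTail ((X : R⟦X⟧) ^ l) L).coeff m = 0 := by
  rw [thetaTail, thetaTail, sum_mul_sum, map_sum]
  refine sum_eq_zero fun i _ ↦ ?_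
  rw [map_sum]
  refine sum_eq_zero fun k _ ↦ ?_
  rw [← pow_mul, ← pow_mul, neg_one_pow_mul_X_pow, neg_one_pow_mul_X_pow, monomial_mul_monomial,
    coeff_monomial, if_neg (h _ _).symm]

/-- Squaring a sum is additive up to a multiple of two. -/
lemma exists_sum_mul_self_eq {ι S : Type*} [CommRing S] (s : Finset ι) (g : ι → S) :
    ∃ c, (∑ i ∈ s, g i) * (∑ i ∈ s, g i) = ∑ i ∈ s, g i * g i + 2 * c := by
  classical
  induction s using Finset.induction_on with
  | empty => exact ⟨0, by simp⟩
  | insert i s hi ih =>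
    obtain ⟨c, hc⟩ := ih
    refine ⟨c + g i * ∑ i ∈ s, g i, ?_⟩
    rw [sum_insert hi, sum_insert hi]
    linear_combination hc

lemma four_mul_coeff_thetaTail_mul_self (h8 : (8 : R) = 0) {j m K : ℕ}
    (h : ∀ i, 2 * (j * i ^ 2) ≠ m) :
    4 * (thetaTail ((X : R⟦X⟧) ^ j) K * thetaTail ((X : R⟦X⟧) ^ j) K).coeff m = 0 := by
  obtain ⟨c, hc⟩ := exists_sum_mul_self_eq (range K)
    (fun i ↦ (-1) ^ (i + 1) * ((X : R⟦X⟧) ^ j) ^ ((i + 1) ^ 2))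
  have hz : (∑ i ∈ range K, (-1) ^ (i + 1) * ((X : R⟦X⟧) ^ j) ^ ((i + 1) ^ 2) *
      ((-1) ^ (i + 1) * (X ^ j) ^ ((i + 1) ^ 2))).coeff m = 0 := by
    rw [map_sum]
    refine sum_eq_zero fun i _ ↦ ?_
    rw [← pow_mul, neg_one_pow_mul_X_pow, monomial_mul_monomial, coeff_monomial,
      if_neg (by rw [← two_mul]; exact (h _).symm)]
  rw [thetaTail, hc, map_add, hz, two_mul, map_add]
  linear_combination c.coeff m * h8

end Coeff

open PowerSeries in
/-- The congruence for every coprime pair `(a, b)` with `a ≡ 3` and `b ≡ 0` modulo `4`. -/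
theorem eight_dvd_biregOverpartitions {a b m : ℕ} (ha : a % 4 = 3) (hb : b % 4 = 0) (hb0 : 0 < b)
    (hab : a.Coprime b) (hm : m % 16 = 6 ∨ m % 16 = 10 ∨ m % 16 = 14) :
    8 ∣ biregOverpartitions a b m := by
  have h8 : (8 : ZMod 8) = 0 := by decide
  have h8' : (8 : (ZMod 8)⟦X⟧) = 0 := by
    rw [← map_ofNat (PowerSeries.C (R := ZMod 8)) 8, h8, map_zero]
  rw [← ZMod.natCast_eq_zero_iff, ← coeff_genFun_two a b le_rfl]
  set F := Nat.Partition.genFun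
      (fun i _ ↦ if i ≤ m ∧ (¬ a ∣ i ∧ ¬ b ∣ i) then (2 : ZMod 8) else 0)
  let I : Ideal (ZMod 8)⟦X⟧ := Ideal.span {X ^ (m + 1)}
  let π := Ideal.Quotient.mk I
  let θ : ℕ → (ZMod 8)⟦X⟧ := fun j ↦ thetaTail (X ^ j) (m / j)
  have hx : π X ^ (m + 1) = 0 := by
    rw [← map_pow, Ideal.Quotient.eq_zero_iff_mem]
    exact Ideal.mem_span_singleton_self _
  have hF := congrArg π (genFun_two_mul_prod (R := ZMod 8) (fun i ↦ ¬ a ∣ i ∧ ¬ b ∣ i) m)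
  simp only [map_mul, map_prod, apply_ite π, map_sub, map_add, map_one, map_pow] at hF
  have hE := eq_theta_expansion (by rw [← map_ofNat π 8, h8', map_zero]) hx (by omega) hb0 hab hF
    (θ := fun j ↦ π (θ j)) (fun j ↦ by simp [θ, thetaTail])
  have hE' : π F = π (1 + 2 * (θ a + θ b - θ 1 - θ (a * b)) +
      4 * (θ 1 * θ 1 + θ (a * b) * θ (a * b) + θ a * θ b + θ a * θ 1 + θ a * θ (a * b) +
        θ b * θ 1 + θ b * θ (a * b) + θ 1 * θ (a * b))) := by
    simpa only [map_mul, map_sub, map_add, map_one, map_ofNat] using hE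
  rw [Ideal.Quotient.eq, Ideal.mem_span_singleton, X_pow_dvd_iff] at hE'
  have hc := hE' m (Nat.lt_succ_self m)
  rw [map_sub, sub_eq_zero] at hc
  have hm4 : m % 4 = 2 := by omega
  have sq (i : ℕ) : i ^ 2 % 4 = 0 ∨ i ^ 2 % 4 = 1 := by
    rcases Nat.even_or_odd' i with ⟨c, rfl | rfl⟩ <;> ring_nf <;> omega
  have hab4 : a * b % 4 = 0 := by simp [Nat.mul_mod, hb]
  have mul4 {c : ℕ} (i : ℕ) (hc : c % 4 = 0) : c * i ^ 2 % 4 = 0 := by simp [Nat.mul_mod, hc]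
  have mulA (i : ℕ) : a * i ^ 2 % 4 = 0 ∨ a * i ^ 2 % 4 = 3 := by
    rcases sq i with h | h <;> simp [Nat.mul_mod, ha, h]
  have twice (i : ℕ) : 2 * (1 * i ^ 2) ≠ m := by
    have : i ^ 2 % 8 = 0 ∨ i ^ 2 % 8 = 1 ∨ i ^ 2 % 8 = 4 := by
      have : i % 8 < 8 := Nat.mod_lt _ (by norm_num)
      rw [Nat.pow_mod]
      interval_cases i % 8 <;> simp
    omega
  have lin {j : ℕ} (h : ∀ i, j * i ^ 2 ≠ m) : (θ j).coeff m = 0 := coeff_thetaTail_eq_zero h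
  have quad {j l : ℕ} (h : ∀ i k, j * i ^ 2 + l * k ^ 2 ≠ m) : (θ j * θ l).coeff m = 0 :=
    coeff_thetaTail_mul_eq_zero h
  have two_coeff (f : (ZMod 8)⟦X⟧) : (2 * f).coeff m = 2 * f.coeff m := by
    rw [two_mul, map_add, two_mul]
  have four_coeff (f : (ZMod 8)⟦X⟧) : (4 * f).coeff m = 4 * f.coeff m := by
    rw [← map_ofNat (PowerSeries.C (R := ZMod 8)) 4, coeff_C_mul]
  rw [hc]
  simp only [map_add, map_sub, two_coeff, four_coeff, mul_add, coeff_one]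
  have sq1 (i : ℕ) : 1 * i ^ 2 % 4 = 0 ∨ 1 * i ^ 2 % 4 = 1 := by simpa using sq i
  rw [if_neg (by omega), four_mul_coeff_thetaTail_mul_self h8 twice,
    lin (j := a) fun i ↦ by have := mulA i; omega,
    lin (j := b) fun i ↦ by have := mul4 i hb; omega,
    lin (j := 1) fun i ↦ by have := sq1 i; omega,
    lin (j := a * b) fun i ↦ by have := mul4 i hab4; omega,
    quad (j := a * b) (l := a * b) fun i k ↦ by
      have := mul4 i hab4; have := mul4 k hab4; omega,
    quad (j := a) (l := b) fun i k ↦ by have := mulA i; have := mul4 k hb; omega,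
    quad (j := a) (l := 1) fun i k ↦ by have := mulA i; have := sq1 k; omega,
    quad (j := a) (l := a * b) fun i k ↦ by have := mulA i; have := mul4 k hab4; omega,
    quad (j := b) (l := 1) fun i k ↦ by have := mul4 i hb; have := sq1 k; omega,
    quad (j := b) (l := a * b) fun i k ↦ by have := mul4 i hb; have := mul4 k hab4; omega,
    quad (j := 1) (l := a * b) fun i k ↦ by have := sq1 i; have := mul4 k hab4; omega]
  simp

theorem B3pow2_congruences (t : ℕ) (ht : 2 ≤ t) (n : ℕ) :
    8 ∣ biregOverpartitions 3 (2 ^ t) (16 * n + 6) ∧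
    8 ∣ biregOverpartitions 3 (2 ^ t) (16 * n + 10) ∧
    8 ∣ biregOverpartitions 3 (2 ^ t) (16 * n + 14) := by
  have hb : 2 ^ t % 4 = 0 := Nat.mod_eq_zero_of_dvd (pow_dvd_pow 2 ht)
  have hab : Nat.Coprime 3 (2 ^ t) := Nat.Coprime.pow_right t (by norm_num)
  refine ⟨?_, ?_, ?_⟩ <;>
    exact eight_dvd_biregOverpartitions (by norm_num) hb (by positivity) hab (by omega)
end
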